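/- arXiv:2006.08588 — 9 statements merged into one kernel-verified Lean document; each statement's English description precedes it below -/
import Mathlib

section
/- Let F be a field and let A and B be n×n matrices over F with A*B = B*A. Then the F-vector space dimension of the unital subalgebra of the n×n matrix algebra generated by A and B is at most n. -/
open Polynomial

/-- the map `h ↦ h(a) b^j` -/
noncomputable def gerL {F E : Type*} [Field F] [Ring E] [Algebra F E] (a b : E) (j : ℕ) :
    F[X] →ₗ[F] E := (LinearMap.mulRight F (b ^ j)) ∘ₗ (aeval a).toLinearMap

theorem gerL_apply {F E : Type*} [Field F] [Ring E] [Algebra F E] (a b : E) (j : ℕ) (h : F[X]) :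
    gerL a b j h = aeval a h * b ^ j := rfl

/-- span of `h(a) b^i`, `i < j` -/
noncomputable def gerW {F E : Type*} [Field F] [Ring E] [Algebra F E] (a b : E) :
    ℕ → Submodule F E
  | 0 => ⊥
  | (j + 1) => gerW a b j ⊔ LinearMap.range (gerL (F := F) a b j)

section count
variable {F E : Type*} [Field F] [Ring E] [Algebra F E]

theorem gerW_mem (a b : E) (j i : ℕ) (hij : i < j) (h : F[X]) :
    aeval a h * b ^ i ∈ gerW (F := F) a b j := by
  induction j with
  | zero => omega
  | succ j ih =>
    rcases Nat.lt_succ_iff_lt_or_eq.1 hij with h1 | rfl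
    · exact Submodule.mem_sup_left (ih h1)
    · exact Submodule.mem_sup_right ⟨h, rfl⟩

theorem gerW_le (a b : E) (j : ℕ) (S : Submodule F E)
    (H : ∀ i < j, ∀ h : F[X], aeval a h * b ^ i ∈ S) : gerW (F := F) a b j ≤ S := by
  induction j with
  | zero => exact bot_le
  | succ j ih =>
    refine sup_le (ih fun i hi => H i (by omega)) ?_
    rintro _ ⟨h, rfl⟩
    exact H j (by omega) h

theorem gerW_smul (a b : E) (j : ℕ) (q : F[X]) (x : E) (hx : x ∈ gerW (F := F) a b j) :
    aeval a q * x ∈ gerW (F := F) a b j := by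
  have : gerW (F := F) a b j ≤ (gerW (F := F) a b j).comap (LinearMap.mulLeft F (aeval a q)) := by
    apply gerW_le
    intro i hi h
    have := gerW_mem a b j i hi (q * h)
    simpa [mul_assoc] using this
  exact this hx

theorem gerW_finrank [FiniteDimensional F E] (a b : E) (g : ℕ → F[X]) (hg : ∀ j, g j ≠ 0)
    (hr : ∀ j, aeval a (g j) * b ^ j ∈ gerW (F := F) a b j) (k : ℕ) :
    Module.finrank F (gerW (F := F) a b k) ≤ ∑ j ∈ Finset.range k, (g j).natDegree := by
  induction k with
  | zero => exact (finrank_bot F E).le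
  | succ k ih =>
    rw [Finset.sum_range_succ]
    have hle : gerW (F := F) a b (k+1) ≤
        gerW (F := F) a b k ⊔ (degreeLT F (g k).natDegree).map (gerL a b k) := by
      refine sup_le le_sup_left ?_
      rintro _ ⟨h, rfl⟩
      have e := EuclideanDomain.div_add_mod h (g k)
      rw [← e, map_add]
      refine add_mem (Submodule.mem_sup_left ?_) (Submodule.mem_sup_right ⟨_, ?_, rfl⟩)
      · have := gerW_smul a b k (h / g k) _ (hr k)
        rw [gerL_apply, mul_comm (g k), map_mul, mul_assoc]
        exact this
      · rw [SetLike.mem_coe, mem_degreeLT, ← degree_eq_natDegree (hg k)]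
        exact EuclideanDomain.mod_lt h (hg k)
    refine (Submodule.finrank_mono hle).trans ((Submodule.finrank_add_le_finrank_add_finrank _ _).trans
      (add_le_add ih ?_))
    have : FiniteDimensional F (degreeLT F (g k).natDegree) :=
      Module.Finite.equiv (degreeLTEquiv F (g k).natDegree).symm
    refine (Submodule.finrank_map_le _ _).trans ?_
    rw [(degreeLTEquiv F (g k).natDegree).finrank_eq]
    simp

theorem ger_count [FiniteDimensional F E] (a b : E) (hab : a * b = b * a)
    (g : ℕ → F[X]) (hg : ∀ j, g j ≠ 0)
    (hr : ∀ j, aeval a (g j) * b ^ j ∈ gerW (F := F) a b j) (k : ℕ) (hk : g k = 1) :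
    Module.finrank F (Algebra.adjoin F {a, b}) ≤ ∑ j ∈ Finset.range k, (g j).natDegree := by
  refine le_trans ?_ (gerW_finrank a b g hg hr k)
  have hbk : b ^ k ∈ gerW (F := F) a b k := by simpa [hk] using hr k
  have hcom : ∀ h : F[X], Commute b (aeval a h) := by
    intro h
    have : Commute b a := hab.symm
    induction h using Polynomial.induction_on' with
    | add p q hp hq => simpa using hp.add_right hq
    | monomial n c =>
      rw [aeval_monomial]
      exact (Algebra.commute_algebraMap_right c b).mul_right (this.pow_right n)
  have hb : ∀ x ∈ gerW (F := F) a b k, b * x ∈ gerW (F := F) a b k := by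
    have : gerW (F := F) a b k ≤ (gerW (F := F) a b k).comap (LinearMap.mulLeft F b) := by
      apply gerW_le
      intro i hi h
      rw [Submodule.mem_comap, LinearMap.mulLeft_apply, ← mul_assoc, (hcom h).eq, mul_assoc, ← pow_succ']
      rcases Nat.lt_or_ge (i+1) k with h1 | h1
      · exact gerW_mem a b k _ h1 h
      · obtain rfl : k = i + 1 := by omega
        exact gerW_smul a b _ h _ hbk
    exact fun x hx => this hx
  have h1 : (1 : E) ∈ gerW (F := F) a b k := by
    rcases Nat.eq_zero_or_pos k with rfl | h
    · simpa using hbk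
    · simpa using gerW_mem (F := F) a b k 0 h 1
  have key : ∀ y ∈ Algebra.adjoin F {a, b}, ∀ x ∈ gerW (F := F) a b k, y * x ∈ gerW (F := F) a b k := by
    intro y hy
    induction hy using Algebra.adjoin_induction with
    | mem y hy =>
      rcases hy with rfl | rfl
      · intro x hx
        simpa using gerW_smul y b k X x hx
      · exact hb
    | algebraMap r => 
      intro x hx
      rw [← Algebra.smul_def]
      exact Submodule.smul_mem _ _ hx
    | add y z _ _ hy hz =>
      intro x hx
      rw [add_mul]
      exact add_mem (hy x hx) (hz x hx)
    | mul y z _ _ hy hz =>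
      intro x hx
      rw [mul_assoc]
      exact hy _ (hz x hx)
  have : Subalgebra.toSubmodule (Algebra.adjoin F {a, b}) ≤ gerW (F := F) a b k := by
    intro y hy
    simpa using key y hy 1 h1
  exact Submodule.finrank_mono this

end count

theorem ger_vec {R : Type*} {M : Type*} [CommRing R] [IsDomain R] [IsPrincipalIdealRing R]
    [AddCommGroup M] [Module R M] [Module.Finite R M] (hM : Module.IsTorsion R M) :
    ∃ v : M, ∀ r : R, r • v = 0 → ∀ m : M, r • m = 0 := by
  classical
  obtain ⟨ι, _, p, _, e, ⟨f⟩⟩ := Module.equiv_directSum_of_isTorsion hM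
  refine ⟨f.symm (DFinsupp.equivFunOnFintype.symm fun i => Submodule.Quotient.mk 1), ?_⟩
  intro r hr m
  rw [← map_smul, LinearEquiv.map_eq_zero_iff] at hr
  apply f.injective
  rw [map_smul, map_zero]
  refine DFinsupp.ext fun i => ?_
  have h2 := DFunLike.congr_fun hr i
  replace h2 : (Submodule.Quotient.mk (r • 1) : R ⧸ R ∙ p i ^ e i) = 0 := h2
  rw [smul_eq_mul, mul_one] at h2
  obtain ⟨y, hy⟩ := Submodule.Quotient.mk_surjective _ (f m i)
  change r • (f m i) = 0
  rw [← hy, ← Submodule.Quotient.mk_smul]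
  rw [Submodule.Quotient.mk_eq_zero] at h2 ⊢
  rw [smul_eq_mul, mul_comm]
  exact Submodule.smul_mem _ y h2

theorem ger_CH {R M : Type*} [CommRing R] [Nontrivial R] [AddCommGroup M] [Module R M]
    (B : Module.End R M) (g : R) (j : ℕ) (f : Fin j → M)
    (hf : Submodule.span R (Set.range f) = LinearMap.range (LinearMap.lsmul R M g)) :
    ∃ p : R[X], p.Monic ∧ p.natDegree = j ∧ ∀ m, g • (aeval B p m) = 0 := by
  have h1 : ∀ i, ∃ c : Fin j → R, ∑ l, c l • f l = B (f i) := by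
    intro i
    rw [← Submodule.mem_span_range_iff_exists_fun, hf]
    have : f i ∈ LinearMap.range (LinearMap.lsmul R M g) := by
      rw [← hf]; exact Submodule.subset_span ⟨i, rfl⟩
    obtain ⟨m, hm⟩ := this
    exact ⟨B m, by rw [← hm]; simp⟩
  choose c hc using h1
  let C : Module.End R (Fin j → R) := (Pi.basisFun R (Fin j)).constr R c
  let π := Fintype.linearCombination R f
  have hπ : ∀ x, π (C x) = B (π x) := by
    have : π ∘ₗ C = B ∘ₗ π := by
      refine (Pi.basisFun R (Fin j)).ext fun i => ?_
      simp only [LinearMap.comp_apply, C, Module.Basis.constr_basis]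
      simp [π, Fintype.linearCombination_apply, hc, Pi.single_apply, ite_smul]
    exact fun x => LinearMap.congr_fun this x
  have hp : ∀ (p : R[X]) x, π (aeval C p x) = aeval B p (π x) := by
    intro p
    induction p using Polynomial.induction_on' with
    | add p q hp hq => intro x; simp [hp, hq]
    | monomial n a =>
      intro x
      have : ∀ x, π ((C ^ n) x) = (B ^ n) (π x) := by
        induction n with
        | zero => simp
        | succ n ih => intro x; rw [pow_succ, pow_succ, Module.End.mul_apply, ih, hπ]; rfl
      simp [aeval_monomial, this]
  refine ⟨C.charpoly, C.charpoly_monic, by rw [LinearMap.charpoly_natDegree, Module.finrank_fin_fun], fun m => ?_⟩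
  have : g • m ∈ Submodule.span R (Set.range f) := by rw [hf]; exact ⟨m, rfl⟩
  rw [Submodule.mem_span_range_iff_exists_fun] at this
  obtain ⟨x, hx⟩ := this
  have h2 := hp C.charpoly x
  rw [LinearMap.aeval_self_charpoly] at h2
  rw [← map_smul, ← hx]
  simpa [π, Fintype.linearCombination_apply] using h2.symm

theorem ger_chain {F : Type*} [Field F] (n : ℕ) : ∀ (M : Type*) [AddCommGroup M] [Module F M]
    [Module F[X] M] [IsScalarTower F F[X] M] [FiniteDimensional F M],
    Module.finrank F M = n → 
    ∃ (g : ℕ → F[X]) (k : ℕ), (∀ j, g j ≠ 0) ∧ g k = 1 ∧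
      (∑ j ∈ Finset.range k, (g j).natDegree) ≤ n ∧
      ∀ j, ∃ f : Fin j → M, 
        Submodule.span F[X] (Set.range f) = LinearMap.range (LinearMap.lsmul F[X] M (g j)) := by
  induction n using Nat.strong_induction_on with
  | _ n ih =>
  intro M _ _ _ _ _ hn
  rcases subsingleton_or_nontrivial M with hs | hs
  · exact ⟨fun _ => 1, 0, by simp, rfl, by simp, fun j => ⟨0, Subsingleton.elim _ _⟩⟩
  have hfin : Module.Finite F[X] M := Module.Finite.of_restrictScalars_finite F F[X] M
  have hker : ∀ v : M, ∃ q : F[X], q ≠ 0 ∧ q • v = 0 := by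
    intro v
    by_contra! hcon
    have hinj : Function.Injective ((LinearMap.toSpanSingleton F[X] M v).restrictScalars F) := by
      rw [injective_iff_map_eq_zero]
      intro q hq
      by_contra h0
      exact hcon q h0 hq
    have := Module.Finite.of_injective _ hinj
    exact Polynomial.not_finite this
  have htor : Module.IsTorsion F[X] M := by
    intro v
    obtain ⟨q, hq, hv⟩ := hker v
    exact ⟨⟨q, mem_nonZeroDivisors_of_ne_zero hq⟩, hv⟩
  obtain ⟨v, hv⟩ := ger_vec htor
  obtain ⟨g0, hg0⟩ := IsPrincipalIdealRing.principal (Ideal.torsionOf F[X] M v)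
  have hg0v : g0 • v = 0 := by
    rw [← Ideal.mem_torsionOf_iff, hg0]; exact Submodule.mem_span_singleton_self g0
  have hg0ne : g0 ≠ 0 := by
    rintro rfl
    obtain ⟨q, hq, hv⟩ := hker v
    rw [← Ideal.mem_torsionOf_iff, hg0] at hv
    simp at hv
    exact hq hv
  let N := Submodule.span F[X] {v}
  have hdim : Module.finrank F N = g0.natDegree := by
    rw [← finrank_quotient_span_eq_natDegree (K := F)]
    have e := Ideal.quotTorsionOfEquivSpanSingleton F[X] M v
    rw [hg0] at e
    exact (e.restrictScalars F).finrank_eq.symm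
  have hsum : Module.finrank F (M ⧸ N) + Module.finrank F N = n := by
    rw [← hn]
    exact Submodule.finrank_quotient_add_finrank (N.restrictScalars F)
  have hNpos : 0 < Module.finrank F N := by
    have hv0 : v ≠ 0 := by
      rintro rfl
      obtain ⟨m, hm⟩ := exists_ne (0 : M)
      exact hm (by simpa using hv 1 (by simp) m)
    have : Nontrivial N := ⟨⟨v, Submodule.mem_span_singleton_self v⟩, 0, by
      simpa [Subtype.ext_iff] using hv0⟩
    have : FiniteDimensional F N := inferInstanceAs (FiniteDimensional F (N.restrictScalars F))
    exact Module.finrank_pos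
  have : FiniteDimensional F (M ⧸ N) :=
    inferInstanceAs (FiniteDimensional F (M ⧸ N.restrictScalars F))
  obtain ⟨g, k, hgne, hgk, hgs, hgen⟩ := ih (Module.finrank F (M ⧸ N)) (by omega) (M ⧸ N) rfl
  refine ⟨fun j => Nat.casesOn j g0 g, k + 1, ?_, hgk, ?_, ?_⟩
  · rintro (_ | j)
    · exact hg0ne
    · exact hgne j
  · rw [Finset.sum_range_succ']
    change (∑ j ∈ Finset.range k, (g j).natDegree) + g0.natDegree ≤ n
    omega
  · rintro (_ | j)
    · refine ⟨0, ?_⟩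
      have : LinearMap.range (LinearMap.lsmul F[X] M g0) = ⊥ := by
        rw [LinearMap.range_eq_bot]
        ext m
        exact hv g0 hg0v m
      change _ = LinearMap.range (LinearMap.lsmul F[X] M g0)
      rw [this]
      simp [Set.range_eq_empty]
    · obtain ⟨f, hf⟩ := hgen j
      change ∃ f : Fin (j+1) → M, _ = LinearMap.range (LinearMap.lsmul F[X] M (g j))
      have h1 : ∀ i, ∃ m : M, N.mkQ (g j • m) = f i := by
        intro i
        have : f i ∈ LinearMap.range (LinearMap.lsmul F[X] (M ⧸ N) (g j)) := by
          rw [← hf]; exact Submodule.subset_span ⟨i, rfl⟩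
        obtain ⟨m, hm⟩ := this
        obtain ⟨m, rfl⟩ := N.mkQ_surjective m
        exact ⟨m, by rw [map_smul, ← hm]; rfl⟩
      choose m hm using h1
      -- cyclic intersection
      let I : Ideal F[X] := (LinearMap.range (LinearMap.lsmul F[X] M (g j))).comap
        (LinearMap.toSpanSingleton F[X] M v)
      obtain ⟨d, hd⟩ := IsPrincipalIdealRing.principal I
      have hdI : d ∈ I := by rw [hd]; exact Submodule.mem_span_singleton_self d
      refine ⟨Fin.cons (d • v) fun i => g j • m i, le_antisymm ?_ ?_⟩
      · rw [Submodule.span_le]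
        rintro _ ⟨i, rfl⟩
        refine Fin.cases ?_ (fun i => ?_) i
        · exact hdI
        · exact ⟨m i, by simp⟩
      · rintro _ ⟨y, rfl⟩
        rw [Fin.range_cons, Submodule.span_insert]
        have h2 : N.mkQ (g j • y) ∈ Submodule.span F[X] (Set.range f) := by
          rw [hf]; exact ⟨N.mkQ y, by simp⟩
        rw [Submodule.mem_span_range_iff_exists_fun] at h2
        obtain ⟨c, hc⟩ := h2
        have h3 : g j • y - ∑ i, c i • (g j • m i) ∈ N := by
          rw [← Submodule.ker_mkQ N, LinearMap.mem_ker, map_sub, ← hc, map_sum, sub_eq_zero]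
          exact Finset.sum_congr rfl fun i _ => by rw [map_smul, hm]
        obtain ⟨r, hr⟩ := Submodule.mem_span_singleton.1 h3
        have hrI : r ∈ I := by
          change r • v ∈ LinearMap.range (LinearMap.lsmul F[X] M (g j))
          rw [hr]
          exact sub_mem ⟨y, rfl⟩ (sum_mem fun i _ => Submodule.smul_mem _ _ ⟨m i, rfl⟩)
        rw [hd] at hrI
        obtain ⟨s, rfl⟩ := Submodule.mem_span_singleton.1 hrI
        rw [LinearMap.lsmul_apply, ← sub_add_cancel (g j • y) (∑ i, c i • (g j • m i)), ← hr]
        refine Submodule.add_mem_sup ?_ ?_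
        · rw [smul_eq_mul, mul_smul]
          exact Submodule.smul_mem _ _ (Submodule.mem_span_singleton_self _)
        · exact sum_mem fun i _ => Submodule.smul_mem _ _ (Submodule.subset_span ⟨i, rfl⟩)

theorem ger_end {F M : Type*} [Field F] [AddCommGroup M] [Module F M] [FiniteDimensional F M]
    (a b : Module.End F M) (hab : a * b = b * a) :
    Module.finrank F (Algebra.adjoin F {a, b}) ≤ Module.finrank F M := by
  letI : Module F[X] M := Module.compHom M (aeval a).toRingHom
  have hsm : ∀ (q : F[X]) (m : M), q • m = aeval a q m := fun _ _ => rfl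
  haveI : IsScalarTower F F[X] M := ⟨fun c q m => by simp [hsm]⟩
  obtain ⟨g, k, hgne, hgk, hgs, hgen⟩ := ger_chain (F := F) _ M rfl
  have hcom : ∀ h : F[X], Commute b (aeval a h) := by
    intro h
    have : Commute b a := hab.symm
    induction h using Polynomial.induction_on' with
    | add p q hp hq => simpa using hp.add_right hq
    | monomial n c =>
      rw [aeval_monomial]
      exact (Algebra.commute_algebraMap_right c b).mul_right (this.pow_right n)
  let B : Module.End F[X] M :=
    { toFun := b
      map_add' := map_add b
      map_smul' := fun q m => LinearMap.congr_fun (hcom q) m }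
  have hBpow : ∀ i m, (B ^ i) m = (b ^ i) m := by
    intro i
    induction i with
    | zero => intro m; rfl
    | succ i ih => intro m; rw [pow_succ, pow_succ, Module.End.mul_apply, ih]; rfl
  refine (ger_count a b hab g hgne ?_ k hgk).trans hgs
  intro j
  obtain ⟨f, hf⟩ := hgen j
  obtain ⟨p, hpm, hpd, hp⟩ := ger_CH B (g j) j f hf
  have hz : aeval a (g j) * b ^ j =
      - ∑ i ∈ Finset.range j, aeval a (g j * p.coeff i) * b ^ i := by
    rw [eq_neg_iff_add_eq_zero]
    ext m
    have := hp m
    rw [aeval_eq_sum_range, hpd, Finset.sum_range_succ, ← hpd, hpm.coeff_natDegree, hpd] at this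
    simp only [LinearMap.add_apply, LinearMap.sum_apply, LinearMap.smul_apply, hBpow, one_smul,
      hsm, map_add, map_sum] at this
    rw [add_comm] at this
    simpa [LinearMap.sum_apply] using this
  rw [hz]
  refine neg_mem (sum_mem fun i hi => gerW_mem a b j i (Finset.mem_range.1 hi) _)

/-- Gerstenhaber's theorem: for commuting `n × n` matrices `A, B` over a field `F`,
the unital subalgebra `F[A,B]` they generate has dimension at most `n`. -/
theorem gerstenhaber (F : Type*) [Field F] (n : ℕ)
    (A B : Matrix (Fin n) (Fin n) F) (hcomm : A * B = B * A) :
    Module.finrank F ↥(Algebra.adjoin F {A, B}) ≤ n := by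
  let φ : Matrix (Fin n) (Fin n) F ≃ₐ[F] Module.End F (Fin n → F) := Matrix.toLinAlgEquiv'
  have h := ger_end (φ A) (φ B) (by rw [← map_mul, hcomm, map_mul])
  rw [Module.finrank_fin_fun] at h
  refine le_trans (le_of_eq ?_) h
  have h2 : Algebra.adjoin F {φ A, φ B} = (Algebra.adjoin F {A, B}).map φ.toAlgHom := by
    rw [AlgHom.map_adjoin, Set.image_pair]; rfl
  rw [h2]
  exact ((Algebra.adjoin F {A, B}).equivMapOfInjective φ.toAlgHom φ.injective).toLinearEquiv.finrank_eq
end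

section
/- Let F be a field and let k ≥ 4 be a natural number. Then there exist a natural number n and pairwise commuting n×n matrices A₁, A₂, …, A_k over F such that the F-vector space dimension of the unital subalgebra of the n×n matrix algebra generated by A₁, …, A_k is strictly greater than n. -/
/-- The family: four matrix units followed by zeros. -/
def gerstFam (F : Type*) [Field F] (i : ℕ) : Matrix (Fin 4) (Fin 4) F :=
  match i with
  | 0 => Matrix.single 0 2 1
  | 1 => Matrix.single 0 3 1
  | 2 => Matrix.single 1 2 1
  | 3 => Matrix.single 1 3 1
  | _ => 0

theorem gerstFam_mul (F : Type*) [Field F] (i j : ℕ) : gerstFam F i * gerstFam F j = 0 := by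
  unfold gerstFam
  split <;> split <;> simp

/-- Gerstenhaber's dimension bound fails for `k ≥ 4` commuting matrices: there exist
pairwise commuting `n × n` matrices `A 1, …, A k` over `F` whose generated unital
subalgebra has dimension greater than `n`. -/
theorem gerstenhaber_fails_for_four_or_more (F : Type*) [Field F] (k : ℕ) (hk : 4 ≤ k) :
    ∃ (n : ℕ) (A : Fin k → Matrix (Fin n) (Fin n) F),
      (∀ i j, A i * A j = A j * A i) ∧
      n < Module.finrank F ↥(Algebra.adjoin F (Set.range A)) := by
  refine ⟨4, fun i => gerstFam F i, fun i j => by simp only [gerstFam_mul], ?_⟩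
  set S := Algebra.adjoin F (Set.range fun i : Fin k => gerstFam F i) with hS
  have hm : ∀ i : ℕ, i < 4 → gerstFam F i ∈ S := fun i hi =>
    Algebra.subset_adjoin ⟨⟨i, by omega⟩, rfl⟩
  let v : Fin 5 → S := ![1, ⟨_, hm 0 (by norm_num)⟩, ⟨_, hm 1 (by norm_num)⟩,
    ⟨_, hm 2 (by norm_num)⟩, ⟨_, hm 3 (by norm_num)⟩]
  have hv : LinearIndependent F v := by
    rw [Fintype.linearIndependent_iff]
    intro g hg
    have h := congrArg (fun x : S => (x : Matrix (Fin 4) (Fin 4) F)) hg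
    simp only [Fin.sum_univ_five, v] at h
    have e (a b : Fin 4) := congrFun (congrFun h a) b
    have h0 := e 0 0
    have h1 := e 0 2
    have h2 := e 0 3
    have h3 := e 1 2
    have h4 := e 1 3
    simp [gerstFam, Matrix.single_apply] at h0 h1 h2 h3 h4
    intro i
    fin_cases i <;> simp [h0, h1, h2, h3, h4]
  have h5 := hv.fintype_card_le_finrank
  rw [Fintype.card_fin] at h5
  exact h5
end

section
/- Let F be an algebraically closed field and let A₁, …, A_k be pairwise commuting n×n matrices over F. Then there exists an invertible n×n matrix P over F such that for every i, the matrix P⁻¹ * Aᵢ * P is upper triangular, i.e. its (r, s) entry is 0 whenever s < r (indices ordered as elements of Fin n). -/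
open Module
theorem common_eig {F ι : Type*} [Field F] [IsAlgClosed F] (d : ℕ) :
    ∀ (V : Type _) [AddCommGroup V] [Module F V] [FiniteDimensional F V] [Nontrivial V]
    (_ : finrank F V ≤ d) (f : ι → End F V) (_ : ∀ i j, f i * f j = f j * f i),
    ∃ v : V, v ≠ 0 ∧ ∀ i, ∃ c : F, f i v = c • v := by
  induction d with
  | zero =>
    intro V _ _ _ _ hd
    have := finrank_pos (R := F) (M := V)
    omega
  | succ d ih =>
    intro V _ _ _ _ hd f hf
    by_cases hs : ∀ i, ∃ c : F, ∀ v, f i v = c • v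
    · obtain ⟨v, hv⟩ := exists_ne (0 : V)
      exact ⟨v, hv, fun i => (hs i).imp fun c hc => hc v⟩
    · push Not at hs
      obtain ⟨i, hi⟩ := hs
      obtain ⟨c, hc⟩ := Module.End.exists_eigenvalue (f i)
      obtain ⟨w, hw⟩ := hi c
      let E := Module.End.eigenspace (f i) c
      have hE : E < ⊤ := by
        rw [lt_top_iff_ne_top]
        intro h
        apply hw
        have : w ∈ E := h ▸ Submodule.mem_top
        exact Module.End.mem_eigenspace_iff.1 this
      have hlt := Submodule.finrank_lt hE.ne
      have : Nontrivial E := (Submodule.nontrivial_iff_ne_bot).2 hc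
      have hinv : ∀ j, ∀ x ∈ E, f j x ∈ E := by
        intro j x hx
        have hx := Module.End.mem_eigenspace_iff.1 hx
        refine Module.End.mem_eigenspace_iff.2 ?_
        have := LinearMap.congr_fun (hf i j) x
        simp only [Module.End.mul_apply] at this
        rw [this, hx, map_smul]
      obtain ⟨v, hv, h⟩ := ih E (by omega) (fun j => (f j).restrict (hinv j)) (by
        intro a b
        ext x
        exact LinearMap.congr_fun (hf a b) x)
      refine ⟨v, by simpa using hv, fun j => ?_⟩
      obtain ⟨c, hc⟩ := h j
      exact ⟨c, congrArg Subtype.val hc⟩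

theorem tri {F ι : Type*} [Field F] [IsAlgClosed F] (n : ℕ) :
    ∀ (V : Type _) [AddCommGroup V] [Module F V] [FiniteDimensional F V]
    (_ : finrank F V = n) (f : ι → End F V) (_ : ∀ i j, f i * f j = f j * f i),
    ∃ b : Basis (Fin n) F V, ∀ i r s, r < s → b.repr (f i (b s)) r = 0 := by
  induction n with
  | zero =>
    intro V _ _ _ hd f hf
    exact ⟨finBasisOfFinrankEq F V hd, fun i r => r.elim0⟩
  | succ n ih =>
    intro V _ _ _ hd f hf
    have : Nontrivial V := nontrivial_of_finrank_pos (R := F) (by omega)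
    obtain ⟨φ, hφ, h⟩ := common_eig _ (Dual F V) le_rfl (fun i => (f i).dualMap) (by
      intro i j
      ext φ x
      have := LinearMap.congr_fun (hf j i) x
      simp only [Module.End.mul_apply] at this
      simp [this])
    have hinv : ∀ j, ∀ x ∈ LinearMap.ker φ, f j x ∈ LinearMap.ker φ := by
      intro j x hx
      obtain ⟨c, hc⟩ := h j
      have := LinearMap.congr_fun hc x
      simp only [LinearMap.dualMap_apply, LinearMap.smul_apply] at this
      simp_all
    have hk : finrank F (LinearMap.ker φ) = n := by
      have := Module.Dual.finrank_ker_add_one_of_ne_zero hφ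
      omega
    obtain ⟨b, hb⟩ := ih _ hk (fun j => (f j).restrict (hinv j)) (by
        intro a b
        ext x
        exact LinearMap.congr_fun (hf a b) x)
    obtain ⟨y, hy⟩ : ∃ y, φ y ≠ 0 := by
      by_contra! h0
      exact hφ (LinearMap.ext h0)
    let B := Basis.mkFinCons y b (by
        intro c x hx h0
        have := congrArg φ h0
        rw [map_add, map_smul, LinearMap.mem_ker.1 hx, map_zero, add_zero, smul_eq_mul] at this
        exact (mul_eq_zero.1 this).resolve_right hy) (by
        intro z
        refine ⟨-(φ z / φ y), ?_⟩
        simp [hy])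
    have key : ∀ (x : LinearMap.ker φ), B.repr x = Finsupp.cons 0 (b.repr x) := by
      intro x
      apply B.repr.symm.injective
      simp [Basis.repr_symm_apply, Finsupp.linearCombination_apply, Finsupp.sum_fintype, Fin.sum_univ_succ, B]
      have := congrArg Subtype.val (b.sum_repr x)
      rw [Submodule.coe_sum] at this
      exact this.symm
    refine ⟨B, fun i r s hrs => ?_⟩
    obtain ⟨s, rfl⟩ := Fin.exists_succ_eq_of_ne_zero (Fin.ne_zero_of_lt hrs)
    have e : f i (B s.succ) = ((f i).restrict (hinv i) (b s) : LinearMap.ker φ) := by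
      simp [B]
    rw [e, key]
    induction r using Fin.cases with
    | zero => simp
    | succ r => simpa using hb i r s (by simpa using hrs)

/-- Simultaneous triangularization: pairwise commuting matrices over an algebraically
closed field can be simultaneously conjugated to upper triangular form. -/
theorem simultaneous_triangularization (F : Type*) [Field F] [IsAlgClosed F]
    (n k : ℕ) (A : Fin k → Matrix (Fin n) (Fin n) F)
    (hcomm : ∀ i j, A i * A j = A j * A i) :
    ∃ P : Matrix (Fin n) (Fin n) F, IsUnit P ∧
      ∀ i, ∀ r s : Fin n, s < r → (P⁻¹ * A i * P) r s = 0 := by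
  obtain ⟨b, hb⟩ := tri n (Fin n → F) (by simp) (fun i => Matrix.toLin' (A i)) (by
    intro i j
    simp only [Module.End.mul_eq_comp, ← Matrix.toLin'_mul, hcomm i j])
  let b' := b.reindex Fin.revPerm
  let e := Pi.basisFun F (Fin n)
  have h1 : e.toMatrix b' * b'.toMatrix e = 1 := Basis.toMatrix_mul_toMatrix_flip _ _
  have h2 : b'.toMatrix e * e.toMatrix b' = 1 := Basis.toMatrix_mul_toMatrix_flip _ _
  refine ⟨e.toMatrix b', ⟨⟨_, _, h1, h2⟩, rfl⟩, fun i r s hrs => ?_⟩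
  have h3 : A i = LinearMap.toMatrix e e (Matrix.toLin' (A i)) := by
    simp [e, LinearMap.toMatrix_eq_toMatrix']
  rw [Matrix.inv_eq_right_inv h1, h3, basis_toMatrix_mul_linearMap_toMatrix_mul_basis_toMatrix,
    LinearMap.toMatrix_apply]
  simpa [b'] using hb i r.rev s.rev (by simpa using hrs)
end

section
/- Let F be a field and let A₁, …, A_k be pairwise commuting nilpotent n×n matrices over F. Then there exists an invertible n×n matrix P over F such that for every i, the matrix P⁻¹ * Aᵢ * P is strictly upper triangular, i.e. its (r, s) entry is 0 whenever s ≤ r (indices ordered as elements of Fin n). -/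
theorem sst_exists_vec {F V ι : Type*} [Field F] [AddCommGroup V] [Module F V]
    (f : ι → Module.End F V) (hc : ∀ i j, Commute (f i) (f j)) (hn : ∀ i, IsNilpotent (f i))
    (W : Submodule F V) (hW : W ≠ ⊤) (hinv : ∀ i, ∀ x ∈ W, f i x ∈ W) (S : Finset ι) :
    ∃ x, x ∉ W ∧ ∀ i ∈ S, f i x ∈ W := by
  classical
  induction S using Finset.induction_on with
  | empty =>
    obtain ⟨x, -, hx⟩ := SetLike.exists_of_lt (lt_top_iff_ne_top.mpr hW)
    exact ⟨x, hx, by simp⟩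
  | insert j S hj ih =>
    obtain ⟨x, hx, hS⟩ := ih
    have hex : ∃ p, ((f j) ^ p) x ∈ W := by
      obtain ⟨p, hp⟩ := hn j
      exact ⟨p, by simp [hp]⟩
    have hpow : ∀ p, ∀ y ∈ W, ((f j) ^ p) y ∈ W := by
      intro p
      induction p with
      | zero => intro y hy; simpa using hy
      | succ p ih =>
        intro y hy
        rw [pow_succ']
        exact hinv j _ (ih y hy)
    obtain ⟨q, hq⟩ : ∃ q, Nat.find hex = q + 1 := by
      refine Nat.exists_eq_succ_of_ne_zero fun h => hx ?_
      have := Nat.find_spec hex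
      rw [h] at this
      simpa using this
    refine ⟨((f j) ^ q) x, Nat.find_min hex (by omega), ?_⟩
    intro i hi
    rcases Finset.mem_insert.mp hi with rfl | hi
    · have := Nat.find_spec hex
      rw [hq, pow_succ'] at this
      exact this
    · have h1 := ((hc i j).pow_right q).eq
      have h2 : f i (((f j) ^ q) x) = ((f j) ^ q) (f i x) := LinearMap.congr_fun h1 x
      rw [h2]
      exact hpow q _ (hS i hi)

theorem sst_chain {F V ι : Type*} [Field F] [AddCommGroup V] [Module F V] [Fintype ι]
    [FiniteDimensional F V]
    (f : ι → Module.End F V) (hc : ∀ i j, Commute (f i) (f j)) (hn : ∀ i, IsNilpotent (f i))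
    (m : ℕ) (hm : m ≤ Module.finrank F V) :
    ∃ v : Fin m → V, LinearIndependent F v ∧
      ∀ i s, f i (v s) ∈ Submodule.span F (v '' {t | t < s}) := by
  induction m with
  | zero => exact ⟨Fin.elim0, linearIndependent_empty_type, fun _ s => s.elim0⟩
  | succ m ih =>
    obtain ⟨v, hv, hf⟩ := ih (by omega)
    have hW : Submodule.span F (Set.range v) ≠ ⊤ := by
      intro h
      have := finrank_span_eq_card hv
      rw [h, finrank_top, Fintype.card_fin] at this
      omega
    have hinv : ∀ i, ∀ x ∈ Submodule.span F (Set.range v),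
        f i x ∈ Submodule.span F (Set.range v) := by
      intro i x hx
      have : Submodule.span F (Set.range v) ≤ (Submodule.span F (Set.range v)).comap (f i) := by
        rw [Submodule.span_le]
        rintro _ ⟨s, rfl⟩
        exact Submodule.span_mono (Set.image_subset_range _ _) (hf i s)
      exact this hx
    obtain ⟨x, hx, hfx⟩ := sst_exists_vec f hc hn _ hW hinv Finset.univ
    refine ⟨Fin.snoc v x, linearIndependent_finSnoc.mpr ⟨hv, hx⟩, ?_⟩
    intro i s
    refine Fin.lastCases ?_ (fun s => ?_) s
    · rw [Fin.snoc_last]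
      refine Submodule.span_mono ?_ (hfx i (Finset.mem_univ i))
      rintro _ ⟨t, rfl⟩
      exact ⟨t.castSucc, Fin.castSucc_lt_last t, by simp⟩
    · rw [Fin.snoc_castSucc]
      refine Submodule.span_mono ?_ (hf i s)
      rintro _ ⟨t, ht, rfl⟩
      exact ⟨t.castSucc, Fin.castSucc_lt_castSucc_iff.mpr ht, by simp⟩

/-- Simultaneous strict triangularization: pairwise commuting nilpotent matrices over
any field can be simultaneously conjugated to strictly upper triangular form. -/
theorem simultaneous_strict_triangularization (F : Type*) [Field F]
    (n k : ℕ) (A : Fin k → Matrix (Fin n) (Fin n) F)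
    (hcomm : ∀ i j, A i * A j = A j * A i)
    (hnil : ∀ i, IsNilpotent (A i)) :
    ∃ P : Matrix (Fin n) (Fin n) F, IsUnit P ∧
      ∀ i, ∀ r s : Fin n, s ≤ r → (P⁻¹ * A i * P) r s = 0 := by
  obtain ⟨v, hv, hf⟩ := sst_chain (F := F) (V := Fin n → F)
    (fun i => Matrix.toLinAlgEquiv' (A i))
    (fun i j => (show Commute (A i) (A j) from hcomm i j).map Matrix.toLinAlgEquiv')
    (fun i => (hnil i).map Matrix.toLinAlgEquiv') n (by simp)
  let b : Module.Basis (Fin n) F (Fin n → F) :=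
    basisOfLinearIndependentOfCardEqFinrank' v hv (by simp)
  have hb : ⇑b = v := by simp [b]
  let e := Pi.basisFun F (Fin n)
  have h1 : b.toMatrix e * e.toMatrix b = 1 := Module.Basis.toMatrix_mul_toMatrix_flip b e
  have h2 : e.toMatrix b * b.toMatrix e = 1 := Module.Basis.toMatrix_mul_toMatrix_flip e b
  refine ⟨e.toMatrix b, ⟨⟨_, _, h2, h1⟩, rfl⟩, ?_⟩
  intro i r s hrs
  rw [Matrix.inv_eq_left_inv h1]
  have h3 := basis_toMatrix_mul_linearMap_toMatrix_mul_basis_toMatrix b e b e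
    (Matrix.toLin' (A i))
  have h4 : LinearMap.toMatrix e e (Matrix.toLin' (A i)) = A i :=
    LinearMap.toMatrix'_toLin' (A i)
  rw [h4] at h3
  rw [h3, LinearMap.toMatrix_apply]
  have h5 := hf i s
  rw [← hb, Module.Basis.mem_span_image] at h5
  by_contra hne
  have h6 : r < s := h5 (Finsupp.mem_support_iff.mpr hne)
  exact absurd hrs (not_le.mpr h6)
end

section
/- Let F be an algebraically closed field. Suppose that for every natural number m and all pairwise commuting nilpotent m×m matrices A, B, C over F, the F-vector space dimension of the unital subalgebra generated by A, B, C is at most m. Then for every natural number n and all pairwise commuting n×n matrices A, B, C over F, the F-vector space dimension of the unital subalgebra generated by A, B, C is at most n. -/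
universe u

lemma gr_finrank_range_le {F M N P : Type*} [Field F] [AddCommMonoid M] [Module F M]
    [AddCommGroup N] [Module F N] [AddCommGroup P] [Module F P] [FiniteDimensional F P]
    [FiniteDimensional F N]
    (φ : M →ₗ[F] N) (ψ : M →ₗ[F] P) (h : ∀ x y, ψ x = ψ y → φ x = φ y) :
    Module.finrank F (LinearMap.range φ) ≤ Module.finrank F P := by
  have h1 : LinearMap.range φ = (LinearMap.range (φ.prod ψ)).map (LinearMap.fst F N P) := by
    rw [← LinearMap.range_comp, LinearMap.fst_prod]
  rw [h1]
  refine (Submodule.finrank_map_le _ _).trans ?_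
  refine LinearMap.finrank_le_finrank_of_injective
    (f := (LinearMap.snd F N P).comp (LinearMap.range (φ.prod ψ)).subtype) ?_
  rintro ⟨_, x, rfl⟩ ⟨_, y, rfl⟩ hxy
  have hxy' : ψ x = ψ y := hxy
  simp [hxy', h x y hxy']

lemma gr_adjoin_eq {F A : Type*} [Field F] [Ring A] [Algebra F A] (f : Fin 3 → A) :
    Module.finrank F (Algebra.adjoin F (Set.range f)) =
      Module.finrank F (LinearMap.range (FreeAlgebra.lift F f).toLinearMap) := by
  rw [Algebra.adjoin_range_eq_range_freeAlgebra_lift]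
  rfl

lemma gr_restrict {F V : Type*} [Field F] [AddCommGroup V] [Module F V]
    (f : Fin 3 → Module.End F V) (W : Submodule F V) (hW : ∀ i, ∀ x ∈ W, f i x ∈ W)
    (p : FreeAlgebra F (Fin 3)) : ∀ w : W,
    ((FreeAlgebra.lift F (fun i => (f i).restrict (hW i)) p w : W) : V)
      = FreeAlgebra.lift F f p w := by
  induction p using FreeAlgebra.induction with
  | grade0 r => intro w; simp [Module.algebraMap_end_apply]
  | grade1 i => intro w; simp
  | mul a b ha hb => intro w; simp [ha, hb]
  | add a b ha hb => intro w; simp [ha, hb]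

lemma gr_prod {F P Q : Type*} [Field F] [AddCommGroup P] [Module F P] [FiniteDimensional F P]
    [AddCommGroup Q] [Module F Q] [FiniteDimensional F Q] (S : Submodule F P)
    (T : Submodule F Q) : Module.finrank F (S × T) ≤ Module.finrank F S + Module.finrank F T := by
  rw [Module.finrank_prod]

lemma gr_split {F V : Type*} [Field F] [AddCommGroup V] [Module F V] [FiniteDimensional F V]
    (f : Fin 3 → Module.End F V) (W U : Submodule F V) (hWU : IsCompl W U)
    (hW : ∀ i, ∀ x ∈ W, f i x ∈ W) (hU : ∀ i, ∀ x ∈ U, f i x ∈ U) :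
    Module.finrank F (Algebra.adjoin F (Set.range f)) ≤
      Module.finrank F (Algebra.adjoin F (Set.range fun i => (f i).restrict (hW i))) +
      Module.finrank F (Algebra.adjoin F (Set.range fun i => (f i).restrict (hU i))) := by
  rw [gr_adjoin_eq, gr_adjoin_eq, gr_adjoin_eq]
  set a := (FreeAlgebra.lift F fun i => (f i).restrict (hW i)).toLinearMap with ha
  set b := (FreeAlgebra.lift F fun i => (f i).restrict (hU i)).toLinearMap with hb
  refine (gr_finrank_range_le (P := LinearMap.range a × LinearMap.range b) _
    (a.rangeRestrict.prod b.rangeRestrict) ?_).trans ?_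
  · intro p q hp
    have h1 : a p = a q ∧ b p = b q := by
      exact ⟨congrArg (fun t => (t.1).1) hp, congrArg (fun t => (t.2).1) hp⟩
    ext x
    have hx : x ∈ W ⊔ U := by rw [hWU.sup_eq_top]; trivial
    obtain ⟨w, hw, v, hv, rfl⟩ := Submodule.mem_sup.mp hx
    have e1 := gr_restrict f W hW p ⟨w, hw⟩
    have e2 := gr_restrict f U hU p ⟨v, hv⟩
    have e3 := gr_restrict f W hW q ⟨w, hw⟩
    have e4 := gr_restrict f U hU q ⟨v, hv⟩
    have h2 := h1.1
    have h3 := h1.2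
    rw [ha, AlgHom.toLinearMap_apply, AlgHom.toLinearMap_apply] at h2
    rw [hb, AlgHom.toLinearMap_apply, AlgHom.toLinearMap_apply] at h3
    rw [h2, e3] at e1
    rw [h3, e4] at e2
    dsimp only at e1 e2
    rw [AlgHom.toLinearMap_apply, AlgHom.toLinearMap_apply, map_add, map_add, e1, e2]
  · exact gr_prod _ _

lemma gr_range3 {A : Type*} (f : Fin 3 → A) : Set.range f = {f 0, f 1, f 2} := by
  ext x
  simp [Fin.exists_fin_succ, eq_comm]

lemma gr_shift {F A : Type*} [Field F] [Ring A] [Algebra F A] (f : Fin 3 → A) (c : Fin 3 → F) :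
    Algebra.adjoin F (Set.range f) ≤
      Algebra.adjoin F (Set.range fun i => f i - algebraMap F A (c i)) := by
  refine Algebra.adjoin_le ?_
  rintro _ ⟨i, rfl⟩
  have h1 : f i - algebraMap F A (c i) ∈
      Algebra.adjoin F (Set.range fun i => f i - algebraMap F A (c i)) :=
    Algebra.subset_adjoin ⟨i, rfl⟩
  have := add_mem h1 (Subalgebra.algebraMap_mem _ (c i))
  simpa using this

lemma gr_main (F : Type u) [Field F] [IsAlgClosed F]
    (H : ∀ (m : ℕ) (A B C : Matrix (Fin m) (Fin m) F),
      A * B = B * A → A * C = C * A → B * C = C * B →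
      IsNilpotent A → IsNilpotent B → IsNilpotent C →
      Module.finrank F ↥(Algebra.adjoin F {A, B, C}) ≤ m) (n : ℕ) :
    ∀ (V : Type u) [AddCommGroup V] [Module F V] [FiniteDimensional F V],
      Module.finrank F V = n → ∀ f : Fin 3 → Module.End F V, (∀ i j, Commute (f i) (f j)) →
      Module.finrank F (Algebra.adjoin F (Set.range f)) ≤ n := by
  induction n using Nat.strongRecOn with | ind n ih => ?_
  intro V _ _ _ hn f hf
  by_cases hc : ∀ i, ∃ c, (f i).maxGenEigenspace c = ⊤
  · choose c hc using hc
    let g : Fin 3 → Module.End F V := fun i => f i - algebraMap F _ (c i)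
    have hnil : ∀ i, IsNilpotent (g i) := by
      intro i
      have h := hc i
      rw [Module.End.maxGenEigenspace_eq_genEigenspace_finrank,
        Module.End.genEigenspace_nat, LinearMap.ker_eq_top] at h
      exact ⟨_, h⟩
    have hg : ∀ i j, Commute (g i) (g j) := fun i j =>
      ((hf i j).sub_left (Algebra.commutes _ _)).sub_right
        ((Algebra.commutes _ _ : Commute _ _).symm)
    let e := LinearMap.toMatrixAlgEquiv (Module.finBasisOfFinrankEq F V hn)
    have hcm : ∀ i j, e (g i) * e (g j) = e (g j) * e (g i) := fun i j => by
      rw [← map_mul, (hg i j).eq, map_mul]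
    have hH := H n (e (g 0)) (e (g 1)) (e (g 2)) (hcm _ _) (hcm _ _) (hcm _ _)
      ((hnil _).map e) ((hnil _).map e) ((hnil _).map e)
    refine le_trans ?_ hH
    have h1 : (Algebra.adjoin F (Set.range g)).map (e : Module.End F V →ₐ[F] _)
        = Algebra.adjoin F {e (g 0), e (g 1), e (g 2)} := by
      rw [AlgHom.map_adjoin, gr_range3 g]
      simp [Set.image_insert_eq]
    rw [← h1]
    have h2 : Module.finrank F (Algebra.adjoin F (Set.range f)) ≤
        Module.finrank F (Algebra.adjoin F (Set.range g)) :=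
      Submodule.finrank_mono (s := Subalgebra.toSubmodule (Algebra.adjoin F (Set.range f)))
        (t := Subalgebra.toSubmodule (Algebra.adjoin F (Set.range g))) (gr_shift f c)
    refine le_trans h2 (le_of_eq ?_)
    exact ((Algebra.adjoin F (Set.range g)).equivMapOfInjective _
      e.injective).toLinearEquiv.finrank_eq
  · push Not at hc
    obtain ⟨i, hi⟩ := hc
    have : Nontrivial V := by
      by_contra h
      rw [not_nontrivial_iff_subsingleton] at h
      exact hi 0 (Subsingleton.elim _ _)
    obtain ⟨c, hcc⟩ := Module.End.exists_eigenvalue (f i)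
    let g : Module.End F V := f i - algebraMap F _ c
    have hg : ∀ j, Commute (f j) g := fun j =>
      (hf j i).sub_right ((Algebra.commutes _ _ : Commute _ _).symm)
    have hk : (f i).maxGenEigenspace c = LinearMap.ker (g ^ Module.finrank F V) := by
      rw [Module.End.maxGenEigenspace_eq_genEigenspace_finrank, Module.End.genEigenspace_nat]
      rfl
    set W := LinearMap.ker (g ^ Module.finrank F V) with hWd
    set U := LinearMap.range (g ^ Module.finrank F V) with hUd
    have hdis : Disjoint W U := by
      rw [Submodule.disjoint_def]
      rintro x hx ⟨y, rfl⟩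
      have hy : y ∈ LinearMap.ker (g ^ (Module.finrank F V + Module.finrank F V)) := by
        rw [LinearMap.mem_ker, pow_add]; exact hx
      rw [Module.End.ker_pow_eq_ker_pow_finrank_of_le (by omega)] at hy
      exact hy
    have hrn : Module.finrank F U + Module.finrank F W = n := by
      rw [← hn]; exact LinearMap.finrank_range_add_finrank_ker _
    have hcompl : IsCompl W U := by
      refine ⟨hdis, codisjoint_iff.mpr (Submodule.eq_top_of_finrank_eq ?_)⟩
      have := Submodule.finrank_sup_add_finrank_inf_eq W U
      rw [hdis.eq_bot, finrank_bot] at this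
      omega
    have hW : ∀ j, ∀ x ∈ W, f j x ∈ W := by
      intro j x hx
      rw [hWd, LinearMap.mem_ker] at hx ⊢
      rw [← Module.End.mul_apply, ← ((hg j).pow_right _).eq, Module.End.mul_apply, hx, map_zero]
    have hU : ∀ j, ∀ x ∈ U, f j x ∈ U := by
      rintro j _ ⟨y, rfl⟩
      exact ⟨f j y, by
        rw [← Module.End.mul_apply, ← ((hg j).pow_right _).eq, Module.End.mul_apply]⟩
    have hWlt : Module.finrank F W < n := by
      rw [← hn]; exact Submodule.finrank_lt (hk ▸ hi c)
    have hWpos : 0 < Module.finrank F W := by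
      obtain ⟨v, hv⟩ := hcc.exists_hasEigenvector
      refine Module.finrank_pos_iff_exists_ne_zero.mpr ⟨⟨v, ?_⟩, ?_⟩
      · rw [← hk]
        exact (Module.End.genEigenspace (f i) c).mono le_top hv.1
      · intro h; exact hv.2 (congrArg Subtype.val h)
    have i1 := ih _ hWlt W rfl (fun i => (f i).restrict (hW i)) (by
      intro a b
      ext x
      exact congrArg (fun t : Module.End F V => t x) (hf a b).eq)
    have i2 := ih (Module.finrank F U) (by omega) U rfl (fun i => (f i).restrict (hU i)) (by
      intro a b
      ext x
      exact congrArg (fun t : Module.End F V => t x) (hf a b).eq)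
    exact (gr_split f W U hcompl hW hU).trans
      ((Nat.add_le_add i1 i2).trans (by omega))

/-- Reduction of the Gerstenhaber Problem to the nilpotent case: if the dimension bound
holds for all pairwise commuting nilpotent triples over an algebraically closed field `F`,
then it holds for all pairwise commuting triples over `F`. -/
theorem gerstenhaber_reduction_to_nilpotent (F : Type*) [Field F] [IsAlgClosed F]
    (H : ∀ (m : ℕ) (A B C : Matrix (Fin m) (Fin m) F),
      A * B = B * A → A * C = C * A → B * C = C * B →
      IsNilpotent A → IsNilpotent B → IsNilpotent C →
      Module.finrank F ↥(Algebra.adjoin F {A, B, C}) ≤ m) :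
    ∀ (n : ℕ) (A B C : Matrix (Fin n) (Fin n) F),
      A * B = B * A → A * C = C * A → B * C = C * B →
      Module.finrank F ↥(Algebra.adjoin F {A, B, C}) ≤ n := by
  intro n A B C hAB hAC hBC
  let e : Matrix (Fin n) (Fin n) F ≃ₐ[F] Module.End F (Fin n → F) := Matrix.toLinAlgEquiv'
  let M : Fin 3 → Matrix (Fin n) (Fin n) F := ![A, B, C]
  have hM : ∀ i j, Commute (M i) (M j) := by
    intro i j
    fin_cases i <;> fin_cases j <;>
      simp [M, Commute, SemiconjBy, hAB, hAC, hBC]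
  have h := gr_main F H n (Fin n → F) (by simp) (fun i => e (M i)) (fun i j => (hM i j).map e)
  refine le_trans (le_of_eq ?_) h
  have h1 : (Algebra.adjoin F {A, B, C}).map (e : _ →ₐ[F] Module.End F (Fin n → F))
      = Algebra.adjoin F (Set.range fun i => e (M i)) := by
    rw [AlgHom.map_adjoin, gr_range3 fun i => e (M i)]
    simp [Set.image_insert_eq, M]
  rw [← h1]
  exact ((Algebra.adjoin F {A, B, C}).equivMapOfInjective _
      e.injective).toLinearEquiv.finrank_eq
end

section
/- Suppose that for every prime number p, every natural number n, and all pairwise commuting n×n matrices A, B, C over the field ZMod p of integers modulo p, the dimension of the unital subalgebra generated by A, B, C over ZMod p is at most n. Then for every field F, every natural number n, and all pairwise commuting n×n matrices A, B, C over F, the F-vector space dimension of the unital subalgebra generated by A, B, C is at most n. -/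
def GerstP (p : ℕ) : Prop := ∀ (n : ℕ) (A B C : Matrix (Fin n) (Fin n) (ZMod p)),
      A * B = B * A → A * C = C * A → B * C = C * B →
      Module.finrank (ZMod p) ↥(Algebra.adjoin (ZMod p) {A, B, C}) ≤ n

theorem exists_pow_idem {M : Type*} [Monoid M] [Finite M] (a : M) :
    ∃ N, 0 < N ∧ a ^ N * a ^ N = a ^ N := by
  obtain ⟨i, j, hne, hij⟩ := Finite.exists_ne_map_eq_of_infinite (fun k : ℕ => a ^ k)
  wlog hlt : i < j generalizing i j
  · exact this j i hne.symm hij.symm (by omega)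
  obtain ⟨d, rfl⟩ : ∃ d, j = i + d := ⟨j - i, by omega⟩
  have hd : 0 < d := by omega
  have h1 : ∀ k, a ^ (i + k * d) = a ^ i := by
    intro k
    induction k with
    | zero => simp
    | succ k ih =>
      rw [show i + (k+1) * d = (i + k * d) + d by ring, pow_add, ih, ← pow_add, ← hij]
  refine ⟨(i+1) * d, by positivity, ?_⟩
  have h2 : i ≤ (i+1) * d := by nlinarith
  obtain ⟨r, hr⟩ := Nat.exists_eq_add_of_le h2
  rw [← pow_add]
  calc a ^ ((i+1)*d + (i+1)*d) = a ^ (i + (i+1)*d + r) := by congr 1; omega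
    _ = a ^ ((i+1)*d) := by rw [pow_add, h1, ← pow_add, ← hr]

theorem formH (p : ℕ) [Fact p.Prime] (H : GerstP p) (R V : Type*) [CommRing R]
    [Algebra (ZMod p) R] [AddCommGroup V] [Module R V] [Finite R] [Finite V] [FaithfulSMul R V]
    (a b c : R) (h : Algebra.adjoin (ZMod p) {a, b, c} = ⊤) : Nat.card R ≤ Nat.card V := by
  let : Module (ZMod p) V := Module.compHom V (algebraMap (ZMod p) R)
  have : IsScalarTower (ZMod p) R V := IsScalarTower.of_algebraMap_smul (fun _ _ => rfl)
  let f : R →ₐ[ZMod p] Module.End (ZMod p) V := Algebra.lsmul (ZMod p) (ZMod p) V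
  have hf : Function.Injective f := by
    intro x y hxy
    exact FaithfulSMul.eq_of_smul_eq_smul (fun v : V => LinearMap.congr_fun hxy v)
  let bb := Module.finBasis (ZMod p) V
  let φ : R →ₐ[ZMod p] _ := (LinearMap.toMatrixAlgEquiv bb).toAlgHom.comp f
  have hφ : Function.Injective φ := (LinearMap.toMatrixAlgEquiv bb).injective.comp hf
  have h1 : φ.range = Algebra.adjoin (ZMod p) {φ a, φ b, φ c} := by
    rw [← Algebra.map_top, ← h, AlgHom.map_adjoin]
    simp [Set.image_insert_eq]
  have h2 := H _ (φ a) (φ b) (φ c) (by rw [← map_mul, mul_comm, map_mul])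
    (by rw [← map_mul, mul_comm, map_mul]) (by rw [← map_mul, mul_comm, map_mul])
  rw [← h1, ← (AlgEquiv.ofInjective φ hφ).toLinearEquiv.finrank_eq] at h2
  rw [Module.natCard_eq_pow_finrank (K := ZMod p) (V := R),
    Module.natCard_eq_pow_finrank (K := ZMod p) (V := V)]
  exact Nat.pow_le_pow_right (by simp [(Fact.out : p.Prime).pos]) h2

theorem gen3 (p : ℕ) [Fact p.Prime] (K R : Type*) [Field K] [Finite K] [CommRing R]
    [Nontrivial R] [Algebra (ZMod p) R] [Algebra K R] [Finite R]
    (hid : ∀ e : R, e * e = e → e = 0 ∨ e = 1) (a b c : R)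
    (h : Algebra.adjoin K {a, b, c} = ⊤) :
    ∃ a' : R, Algebra.adjoin (ZMod p) {a', b, c} = ⊤ := by
  have : CharP R p := charP_of_injective_algebraMap (algebraMap (ZMod p) R).injective p
  have : Finite (R →+* R) := Finite.of_injective (fun f : R →+* R => (f : R → R)) DFunLike.coe_injective
  obtain ⟨M, hM, hMi⟩ := exists_pow_idem (M := (R →+* R)) (frobenius R p)
  set π : R →+* R := (frobenius R p) ^ M with hπ
  have hπ1 : ∀ x, π x = x ^ p ^ M := by
    intro x
    rw [hπ, RingHom.coe_pow, iterate_frobenius]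
  have hππ : ∀ x, π (π x) = π x := fun x => RingHom.congr_fun hMi x
  have hnil : ∀ x, π x = x → IsNilpotent x → x = 0 := by
    intro x hx ⟨k, hk⟩
    have h3 : ∀ j, (x ^ (p ^ M) ^ j) = x := by
      intro j
      induction j with
      | zero => simp
      | succ j ih => rw [pow_succ, pow_mul, ih, ← hπ1, hx]
    rw [← h3 k]
    have : k ≤ (p ^ M) ^ k := (Nat.lt_pow_self (Nat.one_lt_pow hM.ne' (Fact.out : p.Prime).one_lt)).le
    exact pow_eq_zero_of_le this hk
  let L : Subring R := π.range
  have hL : ∀ x : R, x ∈ L ↔ π x = x := by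
    intro x
    constructor
    · rintro ⟨y, rfl⟩; exact hππ y
    · intro hx; exact ⟨x, hx⟩
  have hfield : IsField L := by
    refine ⟨⟨0, 1, zero_ne_one⟩, mul_comm, ?_⟩
    intro x hx
    obtain ⟨N, hN, hNi⟩ := exists_pow_idem (x : R)
    rcases hid _ hNi with h0 | h1
    · exact absurd (Subtype.ext (hnil _ ((hL _).1 x.2) ⟨N, h0⟩)) hx
    · refine ⟨x ^ (N - 1), Subtype.ext ?_⟩
      push_cast
      rw [← pow_succ', Nat.sub_add_cancel hN, h1]
  let : Field L := hfield.toField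
  obtain ⟨g, hg⟩ := IsCyclic.exists_generator (α := Lˣ)
  have hg' : ∀ x : L, x ≠ 0 → ∃ k : ℕ, ((g : L) : R) ^ k = x := by
    intro x hx
    have := hg (Units.mk0 x hx)
    rw [← mem_powers_iff_mem_zpowers] at this
    obtain ⟨k, hk⟩ := this
    refine ⟨k, ?_⟩
    have := congrArg (fun u : Lˣ => ((u : L) : R)) hk
    simpa using this
  set θ : R := ((g : L) : R) with hθ
  have hθL : π θ = θ := (hL _).1 (g : L).2
  refine ⟨θ + (a - π a), ?_⟩
  set T := Algebra.adjoin (ZMod p) {θ + (a - π a), b, c} with hT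
  have ha' : θ + (a - π a) ∈ T := Algebra.subset_adjoin (by simp)
  have hb : b ∈ T := Algebra.subset_adjoin (by simp)
  have hc : c ∈ T := Algebra.subset_adjoin (by simp)
  have hθT : θ ∈ T := by
    have : π (θ + (a - π a)) = θ := by simp [hππ, hθL]
    rw [← this, hπ1]
    exact pow_mem ha' _
  have hLT : ∀ x : R, π x = x → x ∈ T := by
    intro x hx
    by_cases h0 : x = 0
    · rw [h0]; exact zero_mem _
    · obtain ⟨k, hk⟩ := hg' ⟨x, (hL x).2 hx⟩ (fun h => h0 (congrArg Subtype.val h))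
      rw [← show θ ^ k = x from hk]
      exact pow_mem hθT k
  have haT : a ∈ T := by
    have : a = (θ + (a - π a)) - θ + π a := by ring
    rw [this]
    exact add_mem (sub_mem ha' hθT) (hLT _ (hππ a))
  have hK : ∀ k : K, algebraMap K R k ∈ T := by
    intro k
    apply hLT
    have h4 := hππ (algebraMap K R k)
    have : CharP K p := (algebraMap K R).charP (algebraMap K R).injective p
    have h5 : π (algebraMap K R k) = algebraMap K R (k ^ p ^ M) := by rw [hπ1, map_pow]
    rw [h5, hπ1, ← map_pow] at h4
    have h6 := (algebraMap K R).injective h4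
    have h7 : k ^ p ^ M = k := by
      have := (iterateFrobenius K p M).injective
      apply this
      simpa [iterateFrobenius_def] using h6
    rw [h5, h7]
  rw [eq_top_iff]
  intro x _
  have hx : x ∈ Algebra.adjoin K {a, b, c} := by rw [h]; trivial
  induction hx using Algebra.adjoin_induction with
  | mem x hx => 
    rcases hx with rfl | rfl | rfl <;> assumption
  | algebraMap k => exact hK k
  | add x y _ _ hx hy => exact add_mem (hx trivial) (hy trivial)
  | mul x y _ _ hx hy => exact mul_mem (hx trivial) (hy trivial)

theorem step2 (p : ℕ) [Fact p.Prime] (H : GerstP p) (K S : Type*) [Field K] [Finite K] [CommRing S]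
    [Algebra (ZMod p) S] [Algebra K S] (a b c : S)
    (h : Algebra.adjoin K {a, b, c} = ⊤) (N : ℕ) : ∀ (V : Type) [AddCommGroup V] [Module S V]
    [Finite V], Nat.card V ≤ N → Nat.card (S ⧸ Module.annihilator S V) ≤ Nat.card V := by
  induction N with
  | zero =>
    intro V _ _ _ hV
    have := Nat.card_pos (α := V)
    omega
  | succ N ih =>
  intro V _ _ _ hV
  let _ := Module.quotientAnnihilator (R := S) (M := V)
  have faith : FaithfulSMul (S ⧸ Module.annihilator S V) V := by
    constructor
    intro x y hxy
    obtain ⟨x, rfl⟩ := Ideal.Quotient.mk_surjective x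
    obtain ⟨y, rfl⟩ := Ideal.Quotient.mk_surjective y
    rw [Ideal.Quotient.eq, Module.mem_annihilator]
    intro v
    have := hxy v
    change x • v = y • v at this
    rw [sub_smul, this, sub_self]
  have finR : Finite (S ⧸ Module.annihilator S V) :=
    Finite.of_injective (fun x (v : V) => x • v) (fun x y hxy =>
      FaithfulSMul.eq_of_smul_eq_smul (fun v : V => congrFun hxy v))
  by_cases hid : ∀ e : (S ⧸ Module.annihilator S V), e * e = e → e = 0 ∨ e = 1
  · rcases subsingleton_or_nontrivial (S ⧸ Module.annihilator S V) with hs | hs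
    · have := Nat.card_pos (α := V)
      rw [Nat.card_unique]; omega
    · let q : S →ₐ[K] (S ⧸ Module.annihilator S V) := Ideal.Quotient.mkₐ K _
      have hq : Function.Surjective q := Ideal.Quotient.mkₐ_surjective _ _
      obtain ⟨a', ha'⟩ := gen3 p K (S ⧸ Module.annihilator S V) hid (q a) (q b) (q c) (by
        have := congrArg (Subalgebra.map q) h
        rw [AlgHom.map_adjoin, Algebra.map_top, (AlgHom.range_eq_top q).2 hq] at this
        simpa [Set.image_insert_eq] using this)
      exact formH p H _ V _ _ _ ha'
  · push Not at hid
    obtain ⟨e, he, he0, he1⟩ := hid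
    obtain ⟨s, rfl⟩ := Ideal.Quotient.mk_surjective e
    rw [← map_mul, Ideal.Quotient.eq, Module.mem_annihilator] at he
    rw [Ne, Ideal.Quotient.eq_zero_iff_mem, Module.mem_annihilator] at he0
    rw [← map_one (Ideal.Quotient.mk _), Ne, Ideal.Quotient.eq, Module.mem_annihilator] at he1
    push Not at he0 he1
    let f : V →ₗ[S] V := LinearMap.lsmul S V s
    have hf : ∀ v, f v = s • v := fun v => rfl
    have hff : ∀ v : V, s • s • v = s • v := by
      intro v
      have := he v
      rwa [sub_smul, sub_eq_zero, mul_smul] at this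
    have hcard : Nat.card V = Nat.card (LinearMap.ker f) * Nat.card (LinearMap.range f) := by
      rw [Submodule.card_eq_card_quotient_mul_card (LinearMap.ker f),
        Nat.card_congr f.quotKerEquivRange.toEquiv]
    have n1 : 1 < Nat.card (LinearMap.range f) := by
      obtain ⟨v, hv⟩ := he0
      rw [Finite.one_lt_card_iff_nontrivial]
      exact ⟨⟨f v, v, rfl⟩, 0, fun h => hv (congrArg Subtype.val h)⟩
    have n2 : 1 < Nat.card (LinearMap.ker f) := by
      obtain ⟨v, hv⟩ := he1
      rw [Finite.one_lt_card_iff_nontrivial]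
      refine ⟨⟨(s - 1) • v, ?_⟩, 0, fun h => hv (congrArg Subtype.val h)⟩
      rw [LinearMap.mem_ker, hf, sub_smul, one_smul, smul_sub, hff, sub_self]
    have i1 := ih (LinearMap.range f) (by nlinarith)
    have i2 := ih (LinearMap.ker f) (by nlinarith)
    have f1 : Finite (S ⧸ Module.annihilator S (LinearMap.range f)) := 
      Finite.of_surjective (Ideal.Quotient.factor (LinearMap.annihilator_le_of_surjective f.rangeRestrict f.surjective_rangeRestrict)) (Ideal.Quotient.factor_surjective _)
    have f2 : Finite (S ⧸ Module.annihilator S (LinearMap.ker f)) := 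
      Finite.of_surjective (Ideal.Quotient.factor (LinearMap.annihilator_le_of_injective (LinearMap.ker f).subtype (LinearMap.ker f).injective_subtype)) (Ideal.Quotient.factor_surjective _)
    let g : (S ⧸ Module.annihilator S V) →+* (S ⧸ Module.annihilator S (LinearMap.ker f)) × (S ⧸ Module.annihilator S (LinearMap.range f)) :=
      RingHom.prod (Ideal.Quotient.factor (LinearMap.annihilator_le_of_injective (LinearMap.ker f).subtype (LinearMap.ker f).injective_subtype))
       (Ideal.Quotient.factor (LinearMap.annihilator_le_of_surjective f.rangeRestrict f.surjective_rangeRestrict))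
    have hg : Function.Injective g := by
      rw [injective_iff_map_eq_zero]
      intro x hx
      obtain ⟨x, rfl⟩ := Ideal.Quotient.mk_surjective x
      rw [Prod.ext_iff] at hx
      obtain ⟨h1, h2⟩ := hx
      simp only [g, RingHom.prod_apply, Ideal.Quotient.factor_mk, Prod.fst_zero, Prod.snd_zero, Ideal.Quotient.eq_zero_iff_mem, Module.mem_annihilator] at h1 h2
      rw [Ideal.Quotient.eq_zero_iff_mem, Module.mem_annihilator]
      intro v
      have e1 := congrArg Subtype.val (h2 ⟨f v, v, rfl⟩)
      have e2 := congrArg Subtype.val (h1 ⟨(s - 1) • v, by rw [LinearMap.mem_ker, hf, sub_smul, one_smul, smul_sub, hff, sub_self]⟩)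
      change x • s • v = 0 at e1
      change x • (s - 1) • v = 0 at e2
      rw [sub_smul, smul_sub, e1, one_smul, zero_sub, neg_eq_zero] at e2
      exact e2
    calc _ ≤ _ := Nat.card_le_card_of_injective g hg
      _ ≤ _ := by rw [Nat.card_prod, hcard]; exact Nat.mul_le_mul i2 i1

theorem step3 (H : ∀ p : ℕ, p.Prime → GerstP p) (K : Type) [Field K] [Finite K] (n : ℕ)
    (A B C : Matrix (Fin n) (Fin n) K) (hAB : A * B = B * A) (hAC : A * C = C * A)
    (hBC : B * C = C * B) : Module.finrank K ↥(Algebra.adjoin K {A, B, C}) ≤ n := by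
  obtain ⟨p, hp⟩ := CharP.exists K
  have hpp : Fact p.Prime := ⟨CharP.char_is_prime K p⟩
  let S := Algebra.adjoin K {A, B, C}
  let : CommRing S := Algebra.adjoinCommRingOfComm K (by
    rintro x (rfl | rfl | rfl) y (rfl | rfl | rfl) <;> simp [*])
  have hAm : A ∈ S := Algebra.subset_adjoin (by simp)
  have hBm : B ∈ S := Algebra.subset_adjoin (by simp)
  have hCm : C ∈ S := Algebra.subset_adjoin (by simp)
  let aK : Algebra K S := S.algebra
  let : Algebra (ZMod p) K := ZMod.algebra K p
  let : Algebra (ZMod p) S := ((algebraMap K S).comp (algebraMap (ZMod p) K)).toAlgebra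
  have hgen : Algebra.adjoin K {(⟨A, hAm⟩ : S), ⟨B, hBm⟩, ⟨C, hCm⟩} = ⊤ := by
    rw [← Algebra.adjoin_adjoin_coe_preimage (R := K) (s := {A, B, C})]
    congr 1
    ext x
    simp [Subtype.ext_iff]
  let φ : S →+* Module.End K (Fin n → K) :=
    (Matrix.toLinAlgEquiv' (R := K) (n := Fin n)).toRingEquiv.toRingHom.comp S.val.toRingHom
  have hφ : Function.Injective φ := 
    (Matrix.toLinAlgEquiv' (R := K) (n := Fin n)).injective.comp Subtype.val_injective
  let : Module S (Fin n → K) := Module.compHom _ φ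
  have h1 := step2 p (H p hpp.out) K S _ _ _ hgen _ (Fin n → K) le_rfl
  have h2 : Module.annihilator S (Fin n → K) = ⊥ := by
    rw [eq_bot_iff]
    intro x hx
    rw [Module.mem_annihilator] at hx
    have : φ x = 0 := LinearMap.ext (fun v => hx v)
    exact hφ (this.trans (map_zero φ).symm)
  have h3 : Nat.card S ≤ Nat.card (Fin n → K) := by
    refine le_trans (le_of_eq ?_) h1
    refine Nat.card_congr (Equiv.ofBijective (Ideal.Quotient.mk _) ⟨?_, Ideal.Quotient.mk_surjective⟩)
    rw [RingHom.injective_iff_ker_eq_bot, Ideal.mk_ker, h2]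
  have h4 := Module.natCard_eq_pow_finrank (K := K) (V := Algebra.adjoin K {A, B, C})
  have h5 := Module.natCard_eq_pow_finrank (K := K) (V := Fin n → K)
  rw [Module.finrank_fin_fun] at h5
  rw [h5] at h3
  have h3' := h4.symm.le.trans h3
  exact (Nat.pow_le_pow_iff_right Finite.one_lt_card).1 h3'

theorem jacZ : IsJacobsonRing ℤ := by
  rw [isJacobsonRing_iff_prime_eq]
  intro P hP
  by_cases h : P = ⊥
  · subst h
    rw [eq_bot_iff]
    intro x hx
    rw [Ideal.mem_jacobson_bot] at hx
    have := hx x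
    rw [Int.isUnit_iff] at this
    rw [Ideal.mem_bot]
    rcases this with h | h <;> nlinarith [mul_self_nonneg x, mul_self_eq_zero.1 (show x * x = 0 by nlinarith [mul_self_nonneg x])]
  · have := hP.isMaximal h
    exact Ideal.jacobson_eq_self_of_isMaximal

theorem finK (K : Type*) [Field K] (h : (Int.castRingHom K).FiniteType) : Finite K := by
  have : Algebra.FiniteType ℤ K := by
    rw [← RingHom.finiteType_algebraMap]; exact h
  have := jacZ
  have hfin : Module.Finite ℤ K := finite_of_finite_type_of_isJacobsonRing ℤ K
  obtain ⟨p, hp⟩ := CharP.exists K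
  rcases CharP.char_is_prime_or_zero K p with hpp | rfl
  · have : Fact p.Prime := ⟨hpp⟩
    let _ : Algebra (ZMod p) K := ZMod.algebra K p
    have : Module.Finite (ZMod p) K := Module.Finite.of_restrictScalars_finite ℤ (ZMod p) K
    exact Module.finite_of_finite (ZMod p)
  · have : CharZero K := CharP.charP_to_charZero K
    have h1 : Function.Injective (algebraMap ℤ K) := (algebraMap ℤ K).injective_int
    have := isField_of_isIntegral_of_isField h1 (Field.toIsField K)
    exact absurd this Int.not_isField

theorem step4 (F : Type) [Field F] (s : Set F) (hs : s.Finite) : 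
    ∃ (K : Type) (_ : Field K) (_ : Finite K), Nonempty ((Algebra.adjoin ℤ s) →+* K) := by
  obtain ⟨M, hM⟩ := Ideal.exists_maximal (Algebra.adjoin ℤ s)
  have : Algebra.FiniteType ℤ (Algebra.adjoin ℤ s) :=
    (Subalgebra.fg_iff_finiteType _).1 (Subalgebra.fg_def.2 ⟨s, hs, rfl⟩)
  let _ := Ideal.Quotient.field M
  have e : Algebra.FiniteType ℤ ((Algebra.adjoin ℤ s) ⧸ M) :=
    Algebra.FiniteType.of_surjective (Ideal.Quotient.mkₐ ℤ M) (Ideal.Quotient.mkₐ_surjective ℤ M)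
  have e' : (Int.castRingHom ((Algebra.adjoin ℤ s) ⧸ M)).FiniteType := by
    rw [← RingHom.finiteType_algebraMap] at e
    rwa [RingHom.ext_int (Int.castRingHom ((Algebra.adjoin ℤ s) ⧸ M)) (algebraMap ℤ _)]
  exact ⟨(Algebra.adjoin ℤ s) ⧸ M, inferInstance, finK _ e', ⟨Ideal.Quotient.mk M⟩⟩

theorem step5 (H : ∀ p : ℕ, p.Prime → GerstP p) (F : Type) [Field F] (n : ℕ)
    (A B C : Matrix (Fin n) (Fin n) F) (hAB : A * B = B * A) (hAC : A * C = C * A)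
    (hBC : B * C = C * B) : Module.finrank F ↥(Algebra.adjoin F {A, B, C}) ≤ n := by
  classical
  let W : FreeMonoid (Fin 3) →* Matrix (Fin n) (Fin n) F := FreeMonoid.lift ![A, B, C]
  have hspan : Subalgebra.toSubmodule (Algebra.adjoin F {A, B, C}) =
      Submodule.span F (Set.range W) := by
    have hr : Set.range ![A, B, C] = {A, B, C} := by
      ext x; simp [eq_comm]; tauto
    rw [Algebra.adjoin_eq_span, ← hr, ← FreeMonoid.mrange_lift]
    rfl
  have hfr : Module.finrank F ↥(Algebra.adjoin F {A, B, C}) = 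
      Module.finrank F (Submodule.span F (Set.range W)) := by
    rw [← hspan]; rfl
  rw [hfr]
  obtain ⟨v, hv, -, hli⟩ := Submodule.exists_fun_fin_finrank_span_eq F (Set.range W)
  choose w hw using hv
  generalize Module.finrank F (Submodule.span F (Set.range W)) = r at v w hw hli ⊢
  -- dual functionals
  have hdual : ∃ D : Fin r → Matrix (Fin n) (Fin n) F, ∀ i j,
      ∑ k, ∑ l, D j k l * (W (w i)) k l = if i = j then 1 else 0 := by
    let φ : Fin r → (Module.Dual F (Matrix (Fin n) (Fin n) F)) := fun j =>
      (Module.Basis.extend hli.linearIndepOn_id).coord ⟨v j, Module.Basis.subset_extend _ ⟨j, rfl⟩⟩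
    refine ⟨fun j k l => φ j (Matrix.single k l 1), ?_⟩
    intro i j
    have h1 : φ j (W (w i)) = if i = j then 1 else 0 := by
      rw [hw]
      have : v i = (Module.Basis.extend hli.linearIndepOn_id) ⟨v i, Module.Basis.subset_extend _ ⟨i, rfl⟩⟩ := by
        simp
      simp only [φ]
      rw [Module.Basis.coord_apply]
      conv_lhs => rw [this]
      rw [Module.Basis.repr_self, Finsupp.single_apply]
      simp [hli.injective.eq_iff]
    rw [← h1]
    conv_rhs => rw [Matrix.matrix_eq_sum_single (W (w i))]
    simp only [map_sum]
    refine Finset.sum_congr rfl fun k _ => Finset.sum_congr rfl fun l _ => ?_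
    rw [mul_comm, ← smul_eq_mul, ← map_smul, Matrix.smul_single, smul_eq_mul, mul_one]
  obtain ⟨D, hD⟩ := hdual
  let X : Fin 3 → Matrix (Fin n) (Fin n) F := ![A, B, C]
  let s : Set F := Set.range (fun t : Fin 3 × Fin n × Fin n => X t.1 t.2.1 t.2.2) ∪
    Set.range (fun t : Fin r × Fin n × Fin n => D t.1 t.2.1 t.2.2)
  have hs : s.Finite := (Set.finite_range _).union (Set.finite_range _)
  obtain ⟨K, _, _, ⟨ψ⟩⟩ := step4 F s hs
  let R := Algebra.adjoin ℤ s
  let ι : R →+* F := R.val.toRingHom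
  have hι : Function.Injective ι := Subtype.val_injective
  let XR : Fin 3 → Matrix (Fin n) (Fin n) R := fun t k l =>
    ⟨X t k l, Algebra.subset_adjoin (Or.inl ⟨(t, k, l), rfl⟩)⟩
  let DR : Fin r → Matrix (Fin n) (Fin n) R := fun t k l =>
    ⟨D t k l, Algebra.subset_adjoin (Or.inr ⟨(t, k, l), rfl⟩)⟩
  have hXR : ∀ t, ι.mapMatrix (XR t) = X t := fun t => rfl
  have hDR : ∀ t k l, ι (DR t k l) = D t k l := fun t k l => rfl
  let WR : FreeMonoid (Fin 3) →* Matrix (Fin n) (Fin n) R := FreeMonoid.lift XR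
  have hWR : ∀ u, ι.mapMatrix (WR u) = W u := by
    intro u
    have : (ι.mapMatrix (m := Fin n)).toMonoidHom.comp WR = W := by
      apply FreeMonoid.hom_eq
      intro t
      simp [WR, W, hXR, X]
    exact DFunLike.congr_fun this u
  have hιm : Function.Injective (ι.mapMatrix (m := Fin n)) := Matrix.map_injective hι
  have hcomm : ∀ t t', XR t * XR t' = XR t' * XR t := by
    intro t t'
    apply hιm
    rw [map_mul, map_mul, hXR, hXR]
    fin_cases t <;> fin_cases t' <;> simp [X, *]
  have hDRR : ∀ i j, ∑ k, ∑ l, DR j k l * (WR (w i)) k l = if i = j then 1 else 0 := by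
    intro i j
    apply hι
    have h1 : ∀ k l, ι (WR (w i) k l) = W (w i) k l := fun k l => by rw [← hWR]; rfl
    simp only [map_sum, map_mul, hDR, h1, hD]
    split_ifs <;> simp
  let Y : Fin 3 → Matrix (Fin n) (Fin n) K := fun t => ψ.mapMatrix (XR t)
  have hY : ∀ t t', Y t * Y t' = Y t' * Y t := by
    intro t t'
    simp only [Y]
    rw [← map_mul, hcomm, map_mul]
  have hfin := step3 H K n (Y 0) (Y 1) (Y 2) (hY _ _) (hY _ _) (hY _ _)
  refine le_trans ?_ hfin
  have hmem : ∀ u, ψ.mapMatrix (WR u) ∈ Algebra.adjoin K {Y 0, Y 1, Y 2} := by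
    intro u
    induction u using FreeMonoid.inductionOn' with
    | one => rw [map_one, map_one]; exact one_mem _
    | of_mul t u ih =>
      rw [map_mul, map_mul]
      refine mul_mem ?_ ih
      have : ψ.mapMatrix (WR (FreeMonoid.of t)) = Y t := by simp [WR, Y]
      rw [this]
      apply Algebra.subset_adjoin
      fin_cases t <;> simp
  let z : Fin r → Algebra.adjoin K {Y 0, Y 1, Y 2} := fun i => ⟨ψ.mapMatrix (WR (w i)), hmem _⟩
  have hz : LinearIndependent K z := by
    rw [Fintype.linearIndependent_iff]
    intro g hg j
    have h1 : ∑ i, g i • ψ.mapMatrix (WR (w i)) = 0 := by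
      have := congrArg Subtype.val hg
      simpa [z] using this
    have h2 : ∀ i, ∑ k, ∑ l, ψ (DR j k l) * ψ.mapMatrix (WR (w i)) k l = if i = j then 1 else 0 := by
      intro i
      have := congrArg ψ (hDRR i j)
      simp only [map_sum, map_mul] at this
      simp only [RingHom.mapMatrix_apply, Matrix.map_apply]
      rw [this]
      split_ifs <;> simp
    have h3 : ∑ i, g i * ∑ k, ∑ l, ψ (DR j k l) * ψ.mapMatrix (WR (w i)) k l = 0 := by
      calc _ = ∑ k, ∑ l, ψ (DR j k l) * (∑ i, g i • ψ.mapMatrix (WR (w i))) k l := by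
            simp only [Matrix.sum_apply, Matrix.smul_apply, smul_eq_mul, Finset.mul_sum]
            rw [Finset.sum_comm]
            refine Finset.sum_congr rfl fun k _ => ?_
            rw [Finset.sum_comm]
            refine Finset.sum_congr rfl fun l _ => Finset.sum_congr rfl fun i _ => ?_
            ring
        _ = 0 := by rw [h1]; simp
    simp only [h2] at h3
    simpa using h3
  simpa using hz.fintype_card_le_finrank

/-- O'Meara's reduction of the Gerstenhaber Problem to the prime fields `ℤ/p`: if the
dimension bound for commuting triples holds over `ZMod p` for every prime `p`, then it
holds over every field. -/
theorem gerstenhaber_reduction_to_prime_fields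
    (H : ∀ (p : ℕ), p.Prime → ∀ (n : ℕ) (A B C : Matrix (Fin n) (Fin n) (ZMod p)),
      A * B = B * A → A * C = C * A → B * C = C * B →
      Module.finrank (ZMod p) ↥(Algebra.adjoin (ZMod p) {A, B, C}) ≤ n) :
    ∀ (F : Type) [Field F] (n : ℕ) (A B C : Matrix (Fin n) (Fin n) F),
      A * B = B * A → A * C = C * A → B * C = C * B →
      Module.finrank F ↥(Algebra.adjoin F {A, B, C}) ≤ n := by
  intro F _ n A B C h1 h2 h3
  exact step5 H F n A B C h1 h2 h3
end

section
/- Let F be a field and let A and B be commuting k×k matrices over F such that the F-vector space dimension of the unital subalgebra generated by A and B equals k. Then every k×k matrix X over F that commutes with both A and B lies in that subalgebra, i.e. X is an element of Algebra.adjoin F {A, B}. -/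
open Polynomial

section LL
variable {K S : Type*} [Field K] [CommRing S] [Algebra K S]

/-- factor out the power of `X` and invert the rest on a module where `y` is nilpotent -/
lemma LL_unit {V : Type*} [AddCommGroup V] [Module S V] (y : S)
    (hy : ∃ N : ℕ, ∀ v : V, y ^ N • v = 0) (p : K[X]) (hp : p ≠ 0) :
    ∃ q r : K[X], ∃ j ≤ p.natDegree, p = X ^ j * q ∧
      ∀ v : V, aeval y r • aeval y p • v = y ^ j • v := by
  obtain ⟨N, hN⟩ := hy
  obtain ⟨q, hq, hnd⟩ := exists_eq_pow_rootMultiplicity_mul_and_not_dvd p hp 0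
  rw [C_0, sub_zero] at hq hnd
  set j := rootMultiplicity 0 p
  have hcop : IsCoprime q (X ^ N) := by
    apply IsCoprime.pow_right
    exact ((irreducible_X.coprime_iff_not_dvd).2 hnd).symm
  obtain ⟨r, t, hrt⟩ := hcop
  refine ⟨q, r, j, ?_, hq, ?_⟩
  · have h := congrArg natDegree hq
    have hq0 : q ≠ 0 := by rintro rfl; simp at hnd
    rw [natDegree_mul (pow_ne_zero _ X_ne_zero) hq0, natDegree_X_pow] at h
    omega
  · intro v
    have h := congrArg (aeval y) hrt
    simp only [map_add, map_mul, map_pow, aeval_X, map_one] at h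
    have h2 : aeval y r * aeval y p = y ^ j * (1 - aeval y t * y ^ N) := by
      rw [← h]; conv_lhs => rw [hq]
      simp only [map_mul, map_pow, aeval_X]; ring
    rw [smul_smul, h2, mul_smul, sub_smul, mul_smul, hN]; simp

variable {V : Type*} [AddCommGroup V] [Module K V] [Module S V] [IsScalarTower K S V]
  [FiniteDimensional K V]

lemma LL_fd (N : Submodule S V) : FiniteDimensional K N :=
  inferInstanceAs (FiniteDimensional K (N.restrictScalars K))

lemma LL_fdq (N : Submodule S V) : FiniteDimensional K (V ⧸ N) :=
  Module.Finite.of_surjective (N.mkQ.restrictScalars K) N.mkQ_surjective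

lemma LL_quot (N : Submodule S V) :
    Module.finrank K (V ⧸ N) + Module.finrank K N = Module.finrank K V :=
  Submodule.finrank_quotient_add_finrank (N.restrictScalars K)

lemma LL_ker (x : S) : Module.finrank K (LinearMap.ker (LinearMap.lsmul S V x)) =
    Module.finrank K (V ⧸ LinearMap.range (LinearMap.lsmul S V x)) := by
  have h1 := LL_quot (K := K) (LinearMap.range (LinearMap.lsmul S V x))
  have h2 := LinearMap.finrank_range_add_finrank_ker
    ((LinearMap.lsmul S V x).restrictScalars K)
  have h3 : Module.finrank K (LinearMap.range ((LinearMap.lsmul S V x).restrictScalars K)) =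
    Module.finrank K (LinearMap.range (LinearMap.lsmul S V x)) := rfl
  have h4 : Module.finrank K (LinearMap.ker ((LinearMap.lsmul S V x).restrictScalars K)) =
    Module.finrank K (LinearMap.ker (LinearMap.lsmul S V x)) := rfl
  omega

/-- evaluation of polynomials in `y` on a vector -/
noncomputable def LL_ev (K : Type*) {S V : Type*} [Field K] [CommRing S] [Algebra K S]
    [AddCommGroup V] [Module K V] [Module S V] [IsScalarTower K S V] (y : S) (w : V) (m : ℕ) :
    degreeLT K m →ₗ[K] V :=
  ((LinearMap.toSpanSingleton S V w).restrictScalars K ∘ₗ (aeval y).toLinearMap) ∘ₗ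
    (degreeLT K m).subtype

lemma LL_ev_apply (y : S) (w : V) (m : ℕ) (p : degreeLT K m) :
    LL_ev K y w m p = aeval y (p : K[X]) • w := rfl

lemma LL_inj (y : S) (hy : ∃ N : ℕ, ∀ v : V, y ^ N • v = 0) (w : V) (m : ℕ)
    (hw : y ^ m • w ≠ 0) : Function.Injective (LL_ev K y w (m + 1)) := by
  rw [injective_iff_map_eq_zero]
  rintro ⟨p, hp⟩ h
  rw [LL_ev_apply] at h
  by_contra hne
  have hp0 : p ≠ 0 := fun h0 => hne (Subtype.ext h0)
  obtain ⟨q, r, j, hj, -, hr⟩ := LL_unit y hy p hp0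
  have h1 := hr w
  simp only at h
  rw [h, smul_zero] at h1
  have hjm : j ≤ m := by
    have := (natDegree_lt_iff_degree_lt hp0).2 (mem_degreeLT.1 hp)
    omega
  apply hw
  rw [← Nat.sub_add_cancel hjm, pow_add, mul_smul, ← h1, smul_zero]

lemma LL_deg (m : ℕ) : Module.finrank K (degreeLT K m) = m := by
  rw [(degreeLTEquiv K m).finrank_eq]; simp

lemma LL_fddeg (m : ℕ) : FiniteDimensional K (degreeLT K m) :=
  Module.Finite.equiv (degreeLTEquiv K m).symm

lemma LL_cyc (y : S) (hy : ∃ N : ℕ, ∀ v : V, y ^ N • v = 0) (w : V) (n : ℕ)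
    (hn : Module.finrank K V = n + 1) (hw : y ^ n • w ≠ 0) :
    y ^ (n + 1) • w = 0 ∧ ∀ u : V, ∃ p : K[X], u = aeval y p • w := by
  have := LL_fddeg (K := K)
  constructor
  · by_contra h
    have := LinearMap.finrank_le_finrank_of_injective (LL_inj (K := K) y hy w _ h)
    rw [LL_deg, hn] at this
    omega
  · intro u
    have h := LL_inj (K := K) y hy w _ hw
    have h2 := (LinearMap.injective_iff_surjective_of_finrank_eq_finrank
      (by rw [LL_deg, hn])).1 h
    obtain ⟨p, hp⟩ := h2 u
    exact ⟨p, by rw [← hp, LL_ev_apply]⟩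

lemma LL_C1 (x y : S) (hx : ∃ N : ℕ, ∀ v : V, x ^ N • v = 0)
    (hy : ∃ N : ℕ, ∀ v : V, y ^ N • v = 0) (n : ℕ)
    (hn : Module.finrank K (V ⧸ LinearMap.range (LinearMap.lsmul S V x)) = n + 1)
    (w : V) (hxw : x • w = 0) (l : V →ₗ[K] K) (hl : l (y ^ n • w) ≠ 0) (v : V)
    (hv : ∀ s : S, l (s • v) = 0) : v = 0 := by
  rw [← LL_ker] at hn
  have := LL_fd (K := K) (LinearMap.ker (LinearMap.lsmul S V x))
  obtain ⟨N, hN⟩ := hx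
  -- claim
  have key : ∀ u : V, x • u = 0 → (∀ s : S, l (s • u) = 0) → u = 0 := by
    intro u hxu hu
    have hy' : ∃ N : ℕ, ∀ v : LinearMap.ker (LinearMap.lsmul S V x), y ^ N • v = 0 := by
      obtain ⟨M, hM⟩ := hy
      exact ⟨M, fun v => Subtype.ext (hM v)⟩
    obtain ⟨h0, hp⟩ := LL_cyc (K := K) y hy' ⟨w, hxw⟩ n hn (fun h => hl (by
      have := congrArg Subtype.val h
      simp only [Submodule.coe_smul, Submodule.coe_zero] at this
      rw [this, map_zero]))
    have h0' : y ^ (n + 1) • w = 0 := congrArg Subtype.val h0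
    obtain ⟨p, hp⟩ := hp ⟨u, hxu⟩
    have hp' : u = aeval y p • w := congrArg Subtype.val hp
    by_contra hu0
    have hp0 : p ≠ 0 := by rintro rfl; simp at hp'; exact hu0 hp'
    obtain ⟨q, r, j, -, hq, hr⟩ := LL_unit y hy p hp0
    have hj : j ≤ n := by
      by_contra hj
      apply hu0
      rw [hp', hq, map_mul, mul_comm, map_pow, aeval_X, mul_smul,
        ← Nat.sub_add_cancel (show n + 1 ≤ j by omega), pow_add, mul_smul (y ^ _), h0']
      simp
    apply hl
    rw [← Nat.sub_add_cancel hj, pow_add, mul_smul, ← hr, ← hp', smul_smul]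
    exact hu _
  have : ∀ i : ℕ, x ^ i • v = 0 → v = 0 := by
    intro i
    induction i with
    | zero => simp
    | succ i ih =>
      intro h
      apply ih
      apply key
      · rwa [smul_smul, ← pow_succ']
      · intro s; rw [smul_smul]; exact hv _
  exact this N (hN v)

lemma LL_C2 (x y : S) (hx : ∃ N : ℕ, ∀ v : V, x ^ N • v = 0)
    (hy : ∃ N : ℕ, ∀ v : V, y ^ N • v = 0) (n : ℕ)
    (hn : Module.finrank K (V ⧸ LinearMap.range (LinearMap.lsmul S V x)) = n + 1)
    (e : V) (he : ¬ ∃ u : V, y ^ n • e = x • u) (v : V) : ∃ s : S, v = s • e := by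
  have := LL_fdq (K := K) (LinearMap.range (LinearMap.lsmul S V x))
  have hy' : ∃ N : ℕ, ∀ v : V ⧸ LinearMap.range (LinearMap.lsmul S V x), y ^ N • v = 0 := by
    obtain ⟨M, hM⟩ := hy
    refine ⟨M, fun v => ?_⟩
    obtain ⟨v, rfl⟩ := Submodule.mkQ_surjective _ v
    rw [← map_smul, hM, map_zero]
  obtain ⟨-, h⟩ := LL_cyc (K := K) y hy' (Submodule.mkQ _ e) n hn (by
    rw [← map_smul, Submodule.mkQ_apply, Ne, Submodule.Quotient.mk_eq_zero]
    rintro ⟨u, hu⟩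
    exact he ⟨u, hu.symm⟩)
  have h1 : ∀ v : V, ∃ s : S, ∃ u : V, v = s • e + x • u := by
    intro v
    obtain ⟨p, hp⟩ := h (Submodule.mkQ _ v)
    rw [← map_smul, ← sub_eq_zero, ← map_sub, Submodule.mkQ_apply,
      Submodule.Quotient.mk_eq_zero] at hp
    obtain ⟨u, hu⟩ := hp
    exact ⟨aeval y p, u, by rw [← LinearMap.lsmul_apply x u, hu]; abel⟩
  have h2 : ∀ i : ℕ, ∀ v : V, ∃ s : S, ∃ u : V, v = s • e + x ^ i • u := by
    intro i
    induction i with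
    | zero => intro v; exact ⟨0, v, by simp⟩
    | succ i ih =>
      intro v
      obtain ⟨s, u, hu⟩ := ih v
      obtain ⟨t, u', hu'⟩ := h1 u
      refine ⟨s + x ^ i * t, u', ?_⟩
      rw [hu, hu', smul_add, smul_smul, smul_smul, ← pow_succ, add_smul, add_assoc]
  obtain ⟨N, hN⟩ := hx
  obtain ⟨s, u, hu⟩ := h2 N v
  exact ⟨s, by rw [hu, hN, add_zero]⟩

lemma LL_dual (l : V →ₗ[K] K) (hl : ∀ v : V, (∀ s : S, l (s • v) = 0) → v = 0)
    (f : V →ₗ[K] K) : ∃ s : S, ∀ v, f v = l (s • v) := by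
  let Φ : S →ₗ[K] Module.Dual K V :=
    { toFun := fun s => l ∘ₗ (Algebra.lsmul K K V s)
      map_add' := by intro a b; ext v; simp [add_smul]
      map_smul' := by intro a b; ext v; simp }
  have h1 : (LinearMap.range Φ).dualCoannihilator = ⊥ := by
    rw [eq_bot_iff]
    intro v hv
    rw [Submodule.mem_dualCoannihilator] at hv
    rw [Submodule.mem_bot]
    apply hl
    intro s
    exact hv (Φ s) ⟨s, rfl⟩
  have h2 := Subspace.dualCoannihilator_dualAnnihilator_eq (W := LinearMap.range Φ)
  rw [h1, Submodule.dualAnnihilator_bot] at h2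
  have h3 : f ∈ LinearMap.range Φ := by rw [← h2]; trivial
  obtain ⟨s, hs⟩ := h3
  exact ⟨s, fun v => by rw [← hs]; rfl⟩

/-- cyclic or cocyclic -/
def LL_P (K S V : Type*) [Field K] [CommRing S] [Algebra K S]
    [AddCommGroup V] [Module K V] [Module S V] [IsScalarTower K S V] : Prop :=
  (∃ e : V, ∀ v : V, ∃ s : S, v = s • e) ∨
  (∃ l : V →ₗ[K] K, ∀ v : V, (∀ s : S, l (s • v) = 0) → v = 0)

lemma LL_main (x y : S) (hx : ∃ N : ℕ, ∀ v : V, x ^ N • v = 0)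
    (hy : ∃ N : ℕ, ∀ v : V, y ^ N • v = 0) (n : ℕ)
    (hn : Module.finrank K (V ⧸ LinearMap.range (LinearMap.lsmul S V x)) = n + 1)
    (H : ¬ ∃ s : S, ∀ v : V, y ^ n • v = (x * s) • v)
    (hP : LL_P K S (LinearMap.range (LinearMap.lsmul S V x))) : LL_P K S V := by
  rcases hP with ⟨⟨e', e, he'⟩, he⟩ | ⟨l', hl'⟩
  · have hgen : ∀ v : V, ∃ s : S, x • v = x • s • e := by
      intro v
      obtain ⟨s, hs⟩ := he ⟨x • v, v, rfl⟩
      refine ⟨s, ?_⟩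
      have h := congrArg Subtype.val hs
      simp only [Submodule.coe_smul] at h
      rw [h, ← he', LinearMap.lsmul_apply, smul_comm]
    by_cases hc : ∃ u : V, y ^ n • e = x • u
    · right
      obtain ⟨u, hu⟩ := hc
      obtain ⟨a, ha⟩ := hgen u
      rw [ha, smul_smul] at hu
      have hw : ∃ w : V, y ^ n • w ≠ (x * a) • w := by
        by_contra hcon
        push Not at hcon
        exact H ⟨a, hcon⟩
      obtain ⟨w, hw⟩ := hw
      obtain ⟨s, hs⟩ := hgen w
      have hxw : x • (w - s • e) = 0 := by rw [smul_sub, hs, sub_self]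
      have hne : y ^ n • (w - s • e) ≠ 0 := by
        intro h0
        apply hw
        have h1 : (x * a) • (w - s • e) = 0 := by rw [mul_comm, mul_smul, hxw, smul_zero]
        rw [smul_sub, sub_eq_zero] at h0 h1
        rw [h0, h1, smul_comm, hu, smul_comm]
      obtain ⟨l, hl⟩ : ∃ l : V →ₗ[K] K, l (y ^ n • (w - s • e)) ≠ 0 := by
        by_contra hcon
        push Not at hcon
        exact hne ((Module.forall_dual_apply_eq_zero_iff K _).1 hcon)
      exact ⟨l, LL_C1 x y hx hy n hn _ hxw l hl⟩
    · left
      exact ⟨e, LL_C2 (K := K) x y hx hy n hn e hc⟩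
  · obtain ⟨l, hl⟩ := LinearMap.exists_extend
      (p := (LinearMap.range (LinearMap.lsmul S V x)).restrictScalars K) l'
    have hl1 : ∀ v : V, (∀ s : S, l (s • x • v) = 0) → x • v = 0 := by
      intro v hv
      have h := hl' ⟨x • v, v, rfl⟩ (by
        intro s
        rw [← hv s, ← hl]
        rfl)
      exact congrArg Subtype.val h
    by_cases hc : ∃ a : S, ∀ v : V, l (y ^ n • v) = l ((x * a) • v)
    · left
      obtain ⟨a, ha⟩ := hc
      have hw : ∃ w : V, y ^ n • w ≠ (x * a) • w := by
        by_contra hcon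
        push Not at hcon
        exact H ⟨a, hcon⟩
      obtain ⟨w, hw⟩ := hw
      refine ⟨w, LL_C2 (K := K) x y hx hy n hn w ?_⟩
      rintro ⟨u, hu⟩
      apply hw
      rw [hu, mul_smul, ← sub_eq_zero, ← smul_sub]
      apply hl1
      intro s
      rw [smul_sub, ← hu, ← mul_smul x a, smul_sub, smul_comm s, smul_comm s, map_sub, ha, sub_self]
    · right
      have : ∃ w : V, x • w = 0 ∧ l (y ^ n • w) ≠ 0 := by
        by_contra hcon
        push Not at hcon
        apply hc
        have := LL_fd (K := K) (LinearMap.range (LinearMap.lsmul S V x))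
        -- factor through multiplication by x
        let g : V →ₗ[K] K := l ∘ₗ (Algebra.lsmul K K V (y ^ n))
        let fx : V →ₗ[K] V := Algebra.lsmul K K V x
        have hg : g ∈ LinearMap.range fx.dualMap := by
          rw [LinearMap.range_dualMap_eq_dualAnnihilator_ker, Submodule.mem_dualAnnihilator]
          intro w hw
          exact hcon w hw
        obtain ⟨f, hf⟩ := hg
        obtain ⟨a, ha⟩ := LL_dual l' hl' (f ∘ₗ
          ((LinearMap.range (LinearMap.lsmul S V x)).subtype.restrictScalars K))
        refine ⟨a, fun v => ?_⟩
        have h1 := ha ⟨x • v, v, rfl⟩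
        have h2 : g v = f (x • v) := by rw [← hf]; rfl
        have h3 : g v = l (y ^ n • v) := rfl
        rw [← h3, h2, mul_comm, mul_smul]
        rw [← hl] at h1
        exact h1
      obtain ⟨w, hxw, hlw⟩ := this
      exact ⟨l, LL_C1 x y hx hy n hn w hxw l hlw⟩

lemma LL_CH (x y : S) (hx : ∃ N : ℕ, ∀ v : V, x ^ N • v = 0)
    (hy : ∃ N : ℕ, ∀ v : V, y ^ N • v = 0) (n : ℕ)
    (hn : Module.finrank K (V ⧸ LinearMap.range (LinearMap.lsmul S V x)) = n) :
    ∃ s : S, ∀ v : V, y ^ n • v = (x * s) • v := by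
  have := LL_fdq (K := K) (LinearMap.range (LinearMap.lsmul S V x))
  let b := Module.finBasisOfFinrankEq K (V ⧸ LinearMap.range (LinearMap.lsmul S V x)) hn
  choose w hw using fun i => Submodule.mkQ_surjective _ (b i)
  have h1 : ∀ v : V, ∃ c : Fin n → K, ∃ u : V, v = ∑ j, algebraMap K S (c j) • w j + x • u := by
    intro v
    have h := b.sum_repr (Submodule.mkQ _ v)
    simp only [← hw] at h
    have h' : Submodule.mkQ (LinearMap.range (LinearMap.lsmul S V x))
        (v - ∑ j, algebraMap K S (b.repr (Submodule.mkQ _ v) j) • w j) = 0 := by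
      rw [map_sub, sub_eq_zero, map_sum]
      conv_lhs => rw [← h]
      refine Finset.sum_congr rfl fun j _ => ?_
      rw [map_smul, algebraMap_smul]
    rw [Submodule.mkQ_apply, Submodule.Quotient.mk_eq_zero] at h'
    obtain ⟨u, hu⟩ := h'
    exact ⟨_, u, by rw [← LinearMap.lsmul_apply x u, hu]; abel⟩
  have h2 : ∀ i : ℕ, ∀ v : V, ∃ s : Fin n → S, ∃ u : V, v = ∑ j, s j • w j + x ^ i • u := by
    intro i
    induction i with
    | zero => intro v; exact ⟨0, v, by simp⟩
    | succ i ih =>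
      intro v
      obtain ⟨s, u, hu⟩ := ih v
      obtain ⟨t, u', hu'⟩ := h1 u
      refine ⟨fun j => s j + x ^ i * algebraMap K S (t j), u', ?_⟩
      simp only [add_smul, Finset.sum_add_distrib]
      rw [hu, hu', smul_add, Finset.smul_sum, smul_smul, ← pow_succ, add_assoc]
      simp only [smul_smul]
  obtain ⟨N, hN⟩ := hx
  have h3 : ∀ v : V, ∃ s : Fin n → S, v = ∑ j, s j • w j := by
    intro v
    obtain ⟨s, u, hu⟩ := h2 N v
    exact ⟨s, by rw [hu, hN, add_zero]⟩
  choose c u hc using fun i => h1 (y • w i)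
  choose s hs using fun i => h3 (u i)
  let C : Matrix (Fin n) (Fin n) K := Matrix.of c
  let M0 : Matrix (Fin n) (Fin n) S := Matrix.scalar (Fin n) y - C.map (algebraMap K S)
  let M : Matrix (Fin n) (Fin n) S := M0 - x • Matrix.of s
  have hM : ∀ i, ∑ j, M i j • w j = 0 := by
    intro i
    have h := hc i
    rw [hs i, Finset.smul_sum] at h
    simp only [M, M0, Matrix.sub_apply, sub_smul, Finset.sum_sub_distrib]
    simp only [Matrix.scalar_apply, Matrix.diagonal_apply, ite_smul, zero_smul,
      Finset.sum_ite_eq, Finset.mem_univ, if_true]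
    rw [h]
    simp [C, smul_smul]
  have hdet : ∀ k, M.det • w k = 0 := by
    intro k
    have h : ∑ i, M.adjugate k i • ∑ j, M i j • w j = 0 := by simp [hM]
    simp only [Finset.smul_sum, smul_smul] at h
    rw [Finset.sum_comm] at h
    simp only [← Finset.sum_smul, ← Matrix.mul_apply] at h
    rw [Matrix.adjugate_mul] at h
    simpa [Matrix.smul_apply, Matrix.one_apply, ite_smul] using h
  have hdet' : ∀ v : V, M.det • v = 0 := by
    intro v
    obtain ⟨t, rfl⟩ := h3 v
    rw [Finset.smul_sum]
    exact Finset.sum_eq_zero fun j _ => by rw [smul_comm, hdet, smul_zero]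
  have hM0 : M0.det = aeval y C.charpoly := by
    rw [Matrix.charpoly, AlgHom.map_det]
    congr 1
    ext i j
    simp [M0, Matrix.charmatrix_apply, Matrix.diagonal_apply]
    split_ifs <;> simp
  have hmod : ∃ t : S, aeval y C.charpoly - M.det = x * t := by
    have : Ideal.Quotient.mk (Ideal.span {x}) M0.det = Ideal.Quotient.mk (Ideal.span {x}) M.det := by
      rw [RingHom.map_det, RingHom.map_det]
      congr 1
      ext i j
      simp only [RingHom.mapMatrix_apply, Matrix.map_apply]
      rw [Ideal.Quotient.eq, Ideal.mem_span_singleton]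
      exact ⟨s i j, by simp [M]⟩
    rw [Ideal.Quotient.eq, Ideal.mem_span_singleton, hM0] at this
    exact this
  obtain ⟨t, ht⟩ := hmod
  obtain ⟨q, r, j, hj, -, hr⟩ := LL_unit y hy C.charpoly C.charpoly_monic.ne_zero
  rw [Matrix.charpoly_natDegree_eq_dim, Fintype.card_fin] at hj
  refine ⟨y ^ (n - j) * (aeval y r * t), fun v => ?_⟩
  have h4 : aeval y C.charpoly • v = (x * t) • v := by
    rw [← ht, sub_smul, hdet', sub_zero]
  have h5 : y ^ n • v = y ^ (n - j) • y ^ j • v := by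
    rw [smul_smul, ← pow_add, Nat.sub_add_cancel hj]
  rw [h5, ← hr, h4, smul_smul, smul_smul]
  congr 1
  ring

lemma LL_num [FiniteDimensional K S] (x y : S) (hxy : Algebra.adjoin K {x, y} = ⊤) (j : ℕ)
    (hj : ∃ s : S, ∀ v : V, y ^ j • v = (x * s) • v) :
    Module.finrank K (S ⧸ Module.annihilator S V) ≤
    Module.finrank K (S ⧸ Module.annihilator S (LinearMap.range (LinearMap.lsmul S V x))) + j := by
  have hdec : ∀ s : S, ∃ p : K[X], ∃ t : S, s = aeval y p + x * t := by
    intro s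
    have hs : s ∈ Algebra.adjoin K {x, y} := by rw [hxy]; trivial
    induction hs using Algebra.adjoin_induction with
    | mem a ha =>
      rcases ha with rfl | rfl
      · exact ⟨0, 1, by simp⟩
      · exact ⟨X, 0, by simp⟩
    | algebraMap r => exact ⟨C r, 0, by simp⟩
    | add a b _ _ iha ihb =>
      obtain ⟨p, t, rfl⟩ := iha
      obtain ⟨p', t', rfl⟩ := ihb
      exact ⟨p + p', t + t', by rw [map_add]; ring⟩
    | mul a b _ _ iha ihb =>
      obtain ⟨p, t, rfl⟩ := iha
      obtain ⟨p', t', rfl⟩ := ihb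
      exact ⟨p * p', t * aeval y p' + aeval y p * t' + x * t * t', by rw [map_mul]; ring⟩
  have := LL_fddeg (K := K) j
  let f1 : (S ⧸ Module.annihilator S (LinearMap.range (LinearMap.lsmul S V x))) →ₗ[S]
      (S ⧸ Module.annihilator S V) :=
    Submodule.liftQ _ ((Submodule.mkQ (Module.annihilator S V)) ∘ₗ (LinearMap.lsmul S S x)) (by
      intro s hs
      rw [Module.mem_annihilator] at hs
      rw [LinearMap.mem_ker, LinearMap.comp_apply, Submodule.mkQ_apply,
        Submodule.Quotient.mk_eq_zero, Module.mem_annihilator]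
      intro v
      have := congrArg Subtype.val (hs ⟨x • v, v, rfl⟩)
      simp only [Submodule.coe_smul, Submodule.coe_zero] at this
      rw [LinearMap.lsmul_apply, smul_eq_mul, mul_comm, mul_smul, this])
  let f2 : degreeLT K j →ₗ[K] (S ⧸ Module.annihilator S V) :=
    ((Submodule.mkQ (Module.annihilator S V)).restrictScalars K) ∘ₗ (aeval y).toLinearMap ∘ₗ
      (degreeLT K j).subtype
  let f := LinearMap.coprod (f1.restrictScalars K) f2
  have hf : Function.Surjective f := by
    intro s'
    obtain ⟨s, rfl⟩ := Submodule.mkQ_surjective _ s'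
    obtain ⟨p, t, rfl⟩ := hdec s
    obtain ⟨a, ha⟩ := hj
    refine ⟨(Submodule.mkQ _ (t + a * aeval y (p /ₘ X ^ j)), ⟨p %ₘ X ^ j, ?_⟩), ?_⟩
    · rw [mem_degreeLT]
      have := degree_modByMonic_lt p (monic_X_pow (R := K) j)
      rwa [degree_X_pow] at this
    · change Submodule.mkQ (Module.annihilator S V) (x * (t + a * aeval y (p /ₘ X ^ j))) +
        Submodule.mkQ (Module.annihilator S V) (aeval y (p %ₘ X ^ j)) = _
      rw [← map_add, ← sub_eq_zero, ← map_sub, Submodule.mkQ_apply,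
        Submodule.Quotient.mk_eq_zero, Module.mem_annihilator]
      intro v
      have h := congrArg (aeval y) (modByMonic_add_div p (X ^ j))
      rw [map_add, map_mul, map_pow, aeval_X] at h
      rw [← h]
      have h2 : x * (t + a * aeval y (p /ₘ X ^ j)) + aeval y (p %ₘ X ^ j) -
        (aeval y (p %ₘ X ^ j) + y ^ j * aeval y (p /ₘ X ^ j) + x * t) =
        (aeval y (p /ₘ X ^ j)) * (x * a - y ^ j) := by ring
      rw [h2, mul_smul, sub_smul, ha, sub_self, smul_zero]
  have h := LinearMap.finrank_le_finrank_of_surjective hf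
  rw [Module.finrank_prod, LL_deg] at h
  exact h

end LL

theorem LL_nil.{u, v, w} {K : Type u} {S : Type v} [Field K] [CommRing S] [Algebra K S]
    [FiniteDimensional K S] (x y : S) (hxy : Algebra.adjoin K {x, y} = ⊤) (m : ℕ) :
    ∀ (V : Type w) [AddCommGroup V] [Module K V] [Module S V] [IsScalarTower K S V]
      [FiniteDimensional K V], Module.finrank K V ≤ m →
      (∃ N : ℕ, ∀ v : V, x ^ N • v = 0) → (∃ N : ℕ, ∀ v : V, y ^ N • v = 0) →
      Module.finrank K (S ⧸ Module.annihilator S V) ≤ Module.finrank K V ∧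
      (Module.finrank K (S ⧸ Module.annihilator S V) = Module.finrank K V → LL_P K S V) := by
  induction m with
  | zero =>
    intro V _ _ _ _ _ hV hx hy
    have hs : Subsingleton V := Module.finrank_zero_iff.1 (Nat.le_zero.1 hV)
    have hann : Module.annihilator S V = ⊤ := Module.annihilator_eq_top_iff.2 hs
    refine ⟨?_, fun _ => Or.inl ⟨0, fun v => ⟨0, Subsingleton.elim _ _⟩⟩⟩
    have : Subsingleton (S ⧸ Module.annihilator S V) := Submodule.Quotient.subsingleton_iff.2 hann
    rw [Module.finrank_zero_of_subsingleton]
    exact Nat.zero_le _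
  | succ m ih =>
    intro V _ _ _ _ _ hV hx hy
    have hq := LL_quot (K := K) (LinearMap.range (LinearMap.lsmul S V x))
    have hfd := LL_fd (K := K) (LinearMap.range (LinearMap.lsmul S V x))
    have hfdq := LL_fdq (K := K) (LinearMap.range (LinearMap.lsmul S V x))
    obtain ⟨n, hn⟩ : ∃ n, Module.finrank K (V ⧸ LinearMap.range (LinearMap.lsmul S V x)) = n :=
      ⟨_, rfl⟩
    cases n with
    | zero =>
      have hs := Module.finrank_zero_iff.1 hn
      have htop := Submodule.Quotient.subsingleton_iff.1 hs
      have hsub : ∀ i : ℕ, ∀ v : V, ∃ u : V, v = x ^ i • u := by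
        intro i
        induction i with
        | zero => intro v; exact ⟨v, by simp⟩
        | succ i ihi =>
          intro v
          obtain ⟨u, hu⟩ := ihi v
          have : u ∈ LinearMap.range (LinearMap.lsmul S V x) := by rw [htop]; trivial
          obtain ⟨t, ht⟩ := this
          exact ⟨t, by rw [hu, ← ht, LinearMap.lsmul_apply, smul_smul, pow_succ]⟩
      obtain ⟨N, hN⟩ := hx
      have h0 : Subsingleton V := ⟨fun a b => by
        obtain ⟨u, rfl⟩ := hsub N a
        obtain ⟨u', rfl⟩ := hsub N b
        rw [hN, hN]⟩
      exact ih V (by rw [Module.finrank_zero_of_subsingleton]; exact Nat.zero_le _) ⟨N, hN⟩ hy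
    | succ n =>
      have ih' := ih (LinearMap.range (LinearMap.lsmul S V x)) (by omega)
        (by obtain ⟨N, hN⟩ := hx; exact ⟨N, fun v => Subtype.ext (hN v)⟩)
        (by obtain ⟨N, hN⟩ := hy; exact ⟨N, fun v => Subtype.ext (hN v)⟩)
      have h1 := LL_num (K := K) (V := V) x y hxy (n + 1) (LL_CH (K := K) x y hx hy (n + 1) hn)
      refine ⟨by omega, fun heq => ?_⟩
      apply LL_main x y hx hy n hn
      · intro H
        have h2 := LL_num (K := K) (V := V) x y hxy n H
        omega
      · apply ih'.2
        omega

lemma LL_cent {K S V : Type*} [Field K] [CommRing S] [Algebra K S]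
    [AddCommGroup V] [Module K V] [Module S V] [IsScalarTower K S V] [FiniteDimensional K V]
    (h : LL_P K S V) (T : V →ₗ[S] V) : ∃ s : S, ∀ v, T v = s • v := by
  rcases h with ⟨e, he⟩ | ⟨l, hl⟩
  · obtain ⟨s, hs⟩ := he (T e)
    refine ⟨s, fun v => ?_⟩
    obtain ⟨t, rfl⟩ := he v
    rw [map_smul, hs, smul_comm]
  · obtain ⟨s, hs⟩ := LL_dual (S := S) l hl (l ∘ₗ T.restrictScalars K)
    refine ⟨s, fun v => ?_⟩
    rw [← sub_eq_zero]
    apply hl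
    intro t
    have h := hs (t • v)
    simp only [LinearMap.comp_apply, LinearMap.restrictScalars_apply, map_smul] at h
    rw [smul_sub, map_sub, h, smul_comm, sub_self]

lemma LL_shift {K S : Type*} [Field K] [CommRing S] [Algebra K S] (x y : S) (a b : K)
    (hxy : Algebra.adjoin K {x, y} = ⊤) :
    Algebra.adjoin K {x - algebraMap K S a, y - algebraMap K S b} = ⊤ := by
  rw [eq_top_iff, ← hxy, Algebra.adjoin_le_iff]
  have key : ∀ (z : S) (c : K) (s : Set S), z - algebraMap K S c ∈ s → z ∈ Algebra.adjoin K s := by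
    intro z c s h
    have := add_mem (Algebra.subset_adjoin (R := K) h) (algebraMap_mem (Algebra.adjoin K s) c)
    simpa using this
  rintro z (rfl | rfl)
  · exact key _ a _ (by simp)
  · exact key _ b _ (by simp)

/-- either `x` is a scalar plus a nilpotent, or the module decomposes -/
lemma LL_fit {K S V : Type*} [Field K] [IsAlgClosed K] [CommRing S] [Algebra K S]
    [AddCommGroup V] [Module K V] [Module S V] [IsScalarTower K S V] [FiniteDimensional K V]
    [Nontrivial V] (x : S) :
    (∃ a : K, ∃ N : ℕ, ∀ v : V, (x - algebraMap K S a) ^ N • v = 0) ∨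
    ∃ P Q : Submodule S V, P ≠ ⊥ ∧ Q ≠ ⊥ ∧ IsCompl P Q ∧
      (∀ T : V →ₗ[S] V, (∀ v ∈ P, T v ∈ P) ∧ (∀ v ∈ Q, T v ∈ Q)) := by
  obtain ⟨a, ha⟩ := Module.End.exists_eigenvalue (Algebra.lsmul K K V x)
  obtain ⟨v, hv⟩ := ha.exists_hasEigenvector
  have hv1 : x • v = a • v := hv.apply_eq_smul
  have hv2 : v ≠ 0 := hv.2
  by_cases hnil : ∃ N : ℕ, ∀ v : V, (x - algebraMap K S a) ^ N • v = 0
  · exact Or.inl ⟨a, hnil⟩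
  right
  have : IsNoetherian S V := isNoetherian_of_tower K inferInstance
  have : IsArtinian S V := isArtinian_of_tower K inferInstance
  set z := x - algebraMap K S a with hz
  obtain ⟨N, hN⟩ := Filter.eventually_atTop.1
    (LinearMap.eventually_isCompl_ker_pow_range_pow (LinearMap.lsmul S V z))
  have hN := hN (N + 1) (Nat.le_succ N)
  have hpow : ∀ u : V, ((LinearMap.lsmul S V z) ^ (N + 1)) u = z ^ (N + 1) • u := by
    intro u
    have : (LinearMap.lsmul S V z) ^ (N + 1) = LinearMap.lsmul S V (z ^ (N + 1)) :=
      (map_pow (Algebra.lsmul S S V) z (N + 1)).symm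
    rw [this]; rfl
  refine ⟨_, _, ?_, ?_, hN, ?_⟩
  · intro h
    apply hv2
    rw [← Submodule.mem_bot S, ← h, LinearMap.mem_ker, hpow, pow_succ, mul_smul]
    rw [hz, sub_smul, hv1, algebraMap_smul, sub_self, smul_zero]
  · intro h
    apply hnil
    refine ⟨N + 1, fun u => ?_⟩
    rw [← hpow, ← Submodule.mem_bot S, ← h]
    exact ⟨u, rfl⟩
  · intro T
    constructor
    · intro u hu
      rw [LinearMap.mem_ker, hpow] at hu ⊢
      rw [← map_smul, hu, map_zero]
    · rintro _ ⟨u, rfl⟩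
      exact ⟨T u, by rw [hpow, hpow, map_smul]⟩

theorem LL_gen.{u, v, w} {K : Type u} {S : Type v} [Field K] [IsAlgClosed K] [CommRing S]
    [Algebra K S] [FiniteDimensional K S] (x y : S) (hxy : Algebra.adjoin K {x, y} = ⊤) (m : ℕ) :
    ∀ (V : Type w) [AddCommGroup V] [Module K V] [Module S V] [IsScalarTower K S V]
      [FiniteDimensional K V], Module.finrank K V ≤ m →
      Module.finrank K (S ⧸ Module.annihilator S V) ≤ Module.finrank K V ∧
      (Module.finrank K (S ⧸ Module.annihilator S V) = Module.finrank K V →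
        ∀ T : V →ₗ[S] V, ∃ s : S, ∀ v, T v = s • v) := by
  induction m with
  | zero =>
    intro V _ _ _ _ _ hV
    have hs : Subsingleton V := Module.finrank_zero_iff.1 (Nat.le_zero.1 hV)
    have h := LL_nil x y hxy 0 V hV ⟨0, fun v => Subsingleton.elim _ _⟩
      ⟨0, fun v => Subsingleton.elim _ _⟩
    exact ⟨h.1, fun e => LL_cent (h.2 e)⟩
  | succ m ih =>
    intro V _ _ _ _ _ hV
    rcases subsingleton_or_nontrivial V with hs | hnt
    · exact ih V (by rw [Module.finrank_zero_of_subsingleton]; exact Nat.zero_le _)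
    have hsplit : (∃ P Q : Submodule S V, P ≠ ⊥ ∧ Q ≠ ⊥ ∧ IsCompl P Q ∧
      (∀ T : V →ₗ[S] V, (∀ v ∈ P, T v ∈ P) ∧ (∀ v ∈ Q, T v ∈ Q))) →
      Module.finrank K (S ⧸ Module.annihilator S V) ≤ Module.finrank K V ∧
      (Module.finrank K (S ⧸ Module.annihilator S V) = Module.finrank K V →
        ∀ T : V →ₗ[S] V, ∃ s : S, ∀ v, T v = s • v) := by
      rintro ⟨P, Q, hP, hQ, hPQ, hT⟩
      have := LL_fd (K := K) P
      have := LL_fd (K := K) Q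
      have hsum : Module.finrank K P + Module.finrank K Q = Module.finrank K V := by
        have := ((Submodule.prodEquivOfIsCompl P Q hPQ).restrictScalars K).finrank_eq
        rw [Module.finrank_prod] at this
        exact this
      have hP0 : 0 < Module.finrank K P := by
        have : Nontrivial P := Submodule.nontrivial_iff_ne_bot.2 hP
        exact Module.finrank_pos
      have hQ0 : 0 < Module.finrank K Q := by
        have : Nontrivial Q := Submodule.nontrivial_iff_ne_bot.2 hQ
        exact Module.finrank_pos
      have iP := ih P (by omega)
      have iQ := ih Q (by omega)
      let f : S →ₗ[S] (S ⧸ Module.annihilator S P) × (S ⧸ Module.annihilator S Q) :=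
        LinearMap.prod (Submodule.mkQ _) (Submodule.mkQ _)
      have hker : LinearMap.ker f = Module.annihilator S V := by
        ext s
        rw [LinearMap.mem_ker, Module.mem_annihilator]
        change (Submodule.mkQ _ s, Submodule.mkQ _ s) = _ ↔ _
        rw [Prod.mk_eq_zero, Submodule.mkQ_apply, Submodule.Quotient.mk_eq_zero,
          Submodule.mkQ_apply, Submodule.Quotient.mk_eq_zero, Module.mem_annihilator,
          Module.mem_annihilator]
        constructor
        · rintro ⟨h1, h2⟩ v
          obtain ⟨⟨p, q⟩, rfl⟩ := (Submodule.prodEquivOfIsCompl P Q hPQ).surjective v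
          rw [Submodule.coe_prodEquivOfIsCompl', smul_add]
          have e1 := congrArg Subtype.val (h1 p)
          have e2 := congrArg Subtype.val (h2 q)
          simp only [Submodule.coe_smul, Submodule.coe_zero] at e1 e2
          rw [e1, e2, add_zero]
        · intro h
          exact ⟨fun p => Subtype.ext (h p), fun q => Subtype.ext (h q)⟩
      let g : (S ⧸ Module.annihilator S V) →ₗ[S]
          (S ⧸ Module.annihilator S P) × (S ⧸ Module.annihilator S Q) :=
        Submodule.liftQ _ f hker.ge
      have hg : Function.Injective g := by
        rw [← LinearMap.ker_eq_bot]
        exact Submodule.ker_liftQ_eq_bot _ _ _ hker.le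
      have hle := LinearMap.finrank_le_finrank_of_injective (f := g.restrictScalars K) hg
      rw [Module.finrank_prod] at hle
      refine ⟨by omega, fun heq T => ?_⟩
      obtain ⟨a, ha⟩ := iP.2 (by omega) (T.restrict (hT T).1)
      obtain ⟨b, hb⟩ := iQ.2 (by omega) (T.restrict (hT T).2)
      have hsurj : Function.Surjective (g.restrictScalars K) :=
        (LinearMap.injective_iff_surjective_of_finrank_eq_finrank
          (by rw [Module.finrank_prod]; omega)).1 hg
      obtain ⟨s', hs'⟩ := hsurj (Submodule.mkQ _ a, Submodule.mkQ _ b)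
      obtain ⟨s, rfl⟩ := Submodule.mkQ_surjective _ s'
      have hs : (Submodule.mkQ (Module.annihilator S P) s, Submodule.mkQ (Module.annihilator S Q) s) =
        (Submodule.mkQ _ a, Submodule.mkQ _ b) := hs'
      rw [Prod.mk.injEq, ← sub_eq_zero, ← map_sub, ← sub_eq_zero (b := Submodule.mkQ _ b),
        ← map_sub, Submodule.mkQ_apply, Submodule.mkQ_apply, Submodule.Quotient.mk_eq_zero,
        Submodule.Quotient.mk_eq_zero, Module.mem_annihilator, Module.mem_annihilator] at hs
      refine ⟨s, fun v => ?_⟩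
      obtain ⟨⟨p, q⟩, rfl⟩ := (Submodule.prodEquivOfIsCompl P Q hPQ).surjective v
      rw [Submodule.coe_prodEquivOfIsCompl', smul_add, map_add]
      have e1 := congrArg Subtype.val (hs.1 p)
      have e2 := congrArg Subtype.val (hs.2 q)
      have e3 := congrArg Subtype.val (ha p)
      have e4 := congrArg Subtype.val (hb q)
      simp only [Submodule.coe_smul, Submodule.coe_zero, sub_smul, sub_eq_zero,
        LinearMap.coe_restrict_apply, Submodule.coe_sub] at e1 e2 e3 e4
      rw [e1, e2, e3, e4]
    rcases LL_fit (K := K) (V := V) x with ⟨a, ha⟩ | h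
    · rcases LL_fit (K := K) (V := V) y with ⟨b, hb⟩ | h
      · have h := LL_nil _ _ (LL_shift x y a b hxy) (m + 1) V hV ha hb
        exact ⟨h.1, fun e => LL_cent (h.2 e)⟩
      · exact hsplit h
    · exact hsplit h

lemma LL_rep {K S : Type*} [Field K] [IsAlgClosed K] [CommRing S] [Algebra K S]
    [FiniteDimensional K S] (k : ℕ) (ψ : S →ₐ[K] Matrix (Fin k) (Fin k) K)
    (hψ : Function.Injective ψ) (x y : S) (hxy : Algebra.adjoin K {x, y} = ⊤) :
    Module.finrank K S ≤ k ∧ (Module.finrank K S = k →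
    ∀ X : Matrix (Fin k) (Fin k) K, X * ψ x = ψ x * X → X * ψ y = ψ y * X →
    ∃ s : S, X = ψ s) := by
  let φ : S →+* Module.End K (Fin k → K) :=
    (Matrix.toLinAlgEquiv' (R := K) (n := Fin k)).toAlgHom.toRingHom.comp ψ.toRingHom
  let _ : Module S (Fin k → K) := Module.compHom _ φ
  have hsm : ∀ (s : S) (v : Fin k → K), s • v = (ψ s).mulVec v :=
    fun s v => rfl
  have _ : IsScalarTower K S (Fin k → K) := ⟨fun c s v => by
    rw [hsm, hsm, map_smul]; exact Matrix.smul_mulVec c (ψ s) v⟩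
  have h := LL_gen x y hxy k (Fin k → K) (by simp)
  have hann : Module.annihilator S (Fin k → K) = ⊥ := by
    rw [eq_bot_iff]
    intro s hs
    rw [Module.mem_annihilator] at hs
    rw [Submodule.mem_bot]
    apply hψ
    apply Matrix.toLin'.injective
    ext1 i
    ext1
    simp only [LinearMap.comp_apply, Matrix.toLin'_apply]
    rw [← hsm, hs, map_zero, Matrix.zero_mulVec]
  have hfr : Module.finrank K (S ⧸ Module.annihilator S (Fin k → K)) =
      Module.finrank K S := by
    rw [hann]
    exact ((Submodule.quotEquivOfEqBot (⊥ : Submodule S S) rfl).restrictScalars K).finrank_eq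
  rw [hfr, Module.finrank_fin_fun] at h
  refine ⟨h.1, fun heq X hXA hXB => ?_⟩
  have hXc : ∀ s : S, X * ψ s = ψ s * X := by
    intro s
    have hs : s ∈ Algebra.adjoin K {x, y} := by rw [hxy]; trivial
    induction hs using Algebra.adjoin_induction with
    | mem a ha => rcases ha with rfl | rfl <;> assumption
    | algebraMap r => rw [AlgHom.commutes]; exact (Algebra.commutes r X).symm
    | add a b _ _ iha ihb => rw [map_add, mul_add, iha, ihb, add_mul]
    | mul a b _ _ iha ihb => rw [map_mul, ← mul_assoc, iha, mul_assoc, ihb, mul_assoc]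
  let T : (Fin k → K) →ₗ[S] (Fin k → K) :=
    { toFun := fun v => X.mulVec v
      map_add' := fun v w => Matrix.mulVec_add _ _ _
      map_smul' := fun s v => by
        simp only [hsm, RingHom.id_apply, Matrix.mulVec_mulVec]
        rw [hXc s] }
  obtain ⟨s, hs⟩ := h.2 heq T
  refine ⟨s, ?_⟩
  apply Matrix.toLin'.injective
  ext1 i
  ext1
  simp only [LinearMap.comp_apply, Matrix.toLin'_apply]
  rw [← hsm, ← hs]
  rfl

lemma LL_closed {K : Type*} [Field K] [IsAlgClosed K] (k : ℕ)
    (A B : Matrix (Fin k) (Fin k) K) (hAB : A * B = B * A) :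
    Module.finrank K ↥(Algebra.adjoin K {A, B}) ≤ k ∧
    (Module.finrank K ↥(Algebra.adjoin K {A, B}) = k →
    ∀ X : Matrix (Fin k) (Fin k) K, X * A = A * X → X * B = B * X →
    X ∈ Algebra.adjoin K {A, B}) := by
  have hcomm : ∀ a ∈ ({A, B} : Set (Matrix (Fin k) (Fin k) K)), ∀ b ∈ ({A, B} : Set _),
      a * b = b * a := by
    rintro a (rfl | rfl) b (rfl | rfl) <;> first | rfl | exact hAB | exact hAB.symm
  letI : CommRing ↥(Algebra.adjoin K {A, B}) := Algebra.adjoinCommRingOfComm K hcomm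
  let x : ↥(Algebra.adjoin K {A, B}) := ⟨A, Algebra.subset_adjoin (by simp)⟩
  let y : ↥(Algebra.adjoin K {A, B}) := ⟨B, Algebra.subset_adjoin (by simp)⟩
  have hxy : Algebra.adjoin K {x, y} = ⊤ := by
    rw [← Algebra.adjoin_adjoin_coe_preimage (R := K) (s := {A, B})]
    congr 1
    ext z
    simp [x, y, Subtype.ext_iff]
  obtain ⟨h1, h2⟩ := LL_rep k (Algebra.adjoin K {A, B}).val Subtype.val_injective x y hxy
  refine ⟨h1, fun heq X hXA hXB => ?_⟩
  obtain ⟨s, rfl⟩ := h2 heq X hXA hXB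
  exact s.2

lemma LL_indep {F K ι : Type*} [Field F] [Field K] [Algebra F K] (k : ℕ) [Fintype ι]
    (b : ι → Matrix (Fin k) (Fin k) F) (hb : LinearIndependent F b) :
    LinearIndependent K (fun i => (b i).map (algebraMap F K)) := by
  rw [Fintype.linearIndependent_iff] at hb ⊢
  intro c hc i
  rw [← Module.forall_dual_apply_eq_zero_iff F]
  intro f
  refine hb (fun i => f (c i)) ?_ i
  ext p q
  have h := congrArg f (congrFun (congrFun hc p) q)
  simp only [Matrix.sum_apply, Matrix.smul_apply, Matrix.map_apply, Matrix.zero_apply,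
    map_zero, map_sum, smul_eq_mul] at h ⊢
  rw [← h]
  refine Finset.sum_congr rfl fun j _ => ?_
  rw [mul_comm (c j), ← Algebra.smul_def, map_smul, smul_eq_mul, mul_comm]

/-- Laffey–Lazarus / Neubauer–Saltman: if commuting `k × k` matrices `A, B` generate a
subalgebra of maximal dimension `k`, then every matrix commuting with both `A` and `B`
is a polynomial in `A` and `B`, i.e. lies in `Algebra.adjoin F {A, B}`. -/
theorem centralizer_of_max_dim_commuting_pair (F : Type*) [Field F] (k : ℕ)
    (A B : Matrix (Fin k) (Fin k) F) (hAB : A * B = B * A)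
    (hdim : Module.finrank F ↥(Algebra.adjoin F {A, B}) = k)
    (X : Matrix (Fin k) (Fin k) F) (hXA : X * A = A * X) (hXB : X * B = B * X) :
    X ∈ Algebra.adjoin F {A, B} := by
  by_contra hX
  let K := AlgebraicClosure F
  let φ : Matrix (Fin k) (Fin k) F →ₐ[F] Matrix (Fin k) (Fin k) K :=
    (Algebra.ofId F K).mapMatrix
  have hφ : ∀ M, φ M = M.map (algebraMap F K) := fun M => rfl
  have hmem : ∀ M ∈ Algebra.adjoin F {A, B}, φ M ∈ Algebra.adjoin K {φ A, φ B} := by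
    intro M hM
    induction hM using Algebra.adjoin_induction with
    | mem a ha => rcases ha with rfl | rfl <;> exact Algebra.subset_adjoin (by simp)
    | algebraMap r =>
      rw [AlgHom.commutes, IsScalarTower.algebraMap_apply F K]
      exact algebraMap_mem _ _
    | add a b _ _ iha ihb => rw [map_add]; exact add_mem iha ihb
    | mul a b _ _ iha ihb => rw [map_mul]; exact mul_mem iha ihb
  obtain ⟨h1, h2⟩ := LL_closed k (φ A) (φ B) (by rw [← map_mul, hAB, map_mul])
  let b := Module.finBasisOfFinrankEq F ↥(Algebra.adjoin F {A, B}) hdim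
  let b' : Fin k → Matrix (Fin k) (Fin k) F := fun i => (b i).1
  have hb' : LinearIndependent F b' :=
    b.linearIndependent.map' (Algebra.adjoin F {A, B}).val.toLinearMap
      (LinearMap.ker_eq_bot.2 Subtype.val_injective)
  have hspan : Submodule.span F (Set.range b') ≤ Subalgebra.toSubmodule (Algebra.adjoin F {A, B}) := by
    rw [Submodule.span_le]
    rintro _ ⟨i, rfl⟩
    exact (b i).2
  have hcard : ∀ (m : ℕ) (c : Fin m → Matrix (Fin k) (Fin k) F), LinearIndependent F c →
      (∀ i, φ (c i) ∈ Algebra.adjoin K {φ A, φ B}) →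
      m ≤ Module.finrank K ↥(Algebra.adjoin K {φ A, φ B}) := by
    intro m c hc hcm
    have hK : LinearIndependent K (fun i => (⟨φ (c i), hcm i⟩ : ↥(Algebra.adjoin K {φ A, φ B}))) :=
      LinearIndependent.of_comp (Algebra.adjoin K {φ A, φ B}).val.toLinearMap
        (LL_indep (K := K) k c hc)
    simpa using hK.fintype_card_le_finrank
  have h3 := hcard k b' hb' (fun i => hmem _ (b i).2)
  have hXK := h2 (le_antisymm h1 h3) (φ X) (by rw [← map_mul, hXA, map_mul])
    (by rw [← map_mul, hXB, map_mul])
  have h4 := hcard (k + 1) (Fin.cons X b') (hb'.finCons fun h => hX (hspan h)) (by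
    intro i
    refine Fin.cases ?_ (fun j => ?_) i
    · simpa using hXK
    · simpa using hmem _ (b j).2)
  omega
end

section
/- Let F be an algebraically closed field and let n ≥ 1. In the polynomial ring R = MvPolynomial ((Fin n × Fin n) ⊕ (Fin n × Fin n)) F, let X and Y be the generic n×n matrices whose (i,j) entries are the variables indexed by the left and right summands respectively, and let I be the ideal of R generated by the n² entries of the matrix X*Y − Y*X. Then the radical of I is a prime ideal (equivalently, the zero locus of I in the prime spectrum of R is an irreducible closed set). -/
open Polynomial in
lemma cyc_alg {F V A : Type*} [Field F] [AddCommGroup V] [Module F V] [CommRing A] [Algebra F A]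
    (f : Module.End F V) (ψ : V ≃ₗ[F] A) (x r : A) (hx : ∀ w, ψ (f w) = x * ψ w)
    (hr : ∀ a : A, ∃ q : F[X], aeval r q = a) :
    ∃ (g : Module.End F V) (v : V), (∀ w, f (g w) = g (f w)) ∧
      ∀ w, ∃ q : F[X], aeval g q v = w := by
  let g : Module.End F V := ψ.symm.toLinearMap ∘ₗ (LinearMap.mulLeft F r) ∘ₗ ψ.toLinearMap
  have hg : ∀ w, ψ (g w) = r * ψ w := by intro w; simp [g]
  have key : ∀ (q : F[X]) (w : V), ψ (aeval g q w) = aeval r q * ψ w := by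
    intro q
    induction q using Polynomial.induction_on' with
    | add p q hp hq => intro w; simp [hp, hq, add_mul]
    | monomial k c =>
      intro w
      simp only [aeval_monomial, Module.End.mul_apply, Module.algebraMap_end_apply, map_smul]
      have : ∀ k : ℕ, ψ ((g ^ k) w) = r ^ k * ψ w := by
        intro k
        induction k with
        | zero => simp
        | succ k ih => rw [pow_succ', Module.End.mul_apply, hg, ih, pow_succ']; ring
      rw [this, Algebra.smul_def, mul_assoc]
  refine ⟨g, ψ.symm 1, fun w => ψ.injective ?_, fun w => ?_⟩
  · rw [hx, hg, hg, hx]; ring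
  · obtain ⟨q, hq⟩ := hr (ψ w)
    refine ⟨q, ψ.injective ?_⟩
    rw [key, hq]; simp

open Polynomial in
lemma exists_cyc_end {F V : Type*} [Field F] [IsAlgClosed F] [AddCommGroup V] [Module F V]
    [FiniteDimensional F V] (f : Module.End F V) :
    ∃ (g : Module.End F V) (v : V), (∀ w, f (g w) = g (f w)) ∧
      ∀ w, ∃ q : F[X], aeval g q v = w := by
  classical
  obtain ⟨ι, _, p, hp, e, ⟨E⟩⟩ := Module.equiv_directSum_of_isTorsion
    (Module.AEval.isTorsion_of_finiteDimensional F V f)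
  let J : ι → Ideal F[X] := fun i => Submodule.span F[X] {p i ^ e i}
  let E' : Module.AEval F V f ≃ₗ[F[X]] (∀ i, F[X] ⧸ J i) :=
    E.trans (DirectSum.linearEquivFunOnFintype F[X] ι _)
  let ψ : V ≃ₗ[F] (∀ i, F[X] ⧸ J i) :=
    (Module.AEval.of F V f).trans (E'.restrictScalars F)
  have hroot : ∀ i, ∃ a, p i ∣ (X - C a) := by
    intro i
    obtain ⟨a, ha⟩ := IsAlgClosed.exists_root (p i) (hp i).degree_pos.ne'
    refine ⟨a, ?_⟩
    exact ((irreducible_X_sub_C a).dvd_symm (hp i) (dvd_iff_isRoot.2 ha))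
  choose a ha using hroot
  obtain ⟨c⟩ : Nonempty (ι ↪ F) := by
    refine ⟨(Fintype.equivFin ι).toEmbedding.trans (Fin.valEmbedding.trans (Infinite.natEmbedding F))⟩
  let x : ∀ i, F[X] ⧸ J i := fun i => Ideal.Quotient.mk _ X
  let r : ∀ i, F[X] ⧸ J i := fun i => Ideal.Quotient.mk _ (X - C (a i) + C (c i))
  refine cyc_alg f ψ x r ?_ ?_
  · intro w
    change E' (Module.AEval.of F V f (f w)) = x * E' (Module.AEval.of F V f w)
    have := Module.AEval.X_smul_of (R := F) (M := V) f w
    rw [show f w = f • w from rfl, ← this, map_smul]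
    ext i
    rfl
  · intro y
    have hsurj : ∀ i, ∃ q : F[X], aeval (r i) q = y i := by
      intro i
      obtain ⟨q, hq⟩ := Ideal.Quotient.mk_surjective (y i)
      refine ⟨q.comp (X + C (a i) - C (c i)), ?_⟩
      have h : r i = (Ideal.Quotient.mkₐ F (J i)) (X - C (a i) + C (c i)) := rfl
      rw [← hq, h, aeval_algHom_apply]
      change Ideal.Quotient.mk (J i) _ = _
      congr 1
      rw [← comp_eq_aeval, comp_assoc]
      have h0 : (X + C (a i) - C (c i)).comp (X - C (a i) + C (c i)) = (X : F[X]) := by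
        simp only [sub_comp, add_comp, X_comp, C_comp]; ring
      rw [h0, comp_X]
    choose q hq using hsurj
    have hco : Pairwise (Function.onFun IsCoprime
        (fun i => Ideal.span {(X - C (c i)) ^ e i})) := by
      intro i j hij
      rw [Function.onFun, Ideal.isCoprime_span_singleton_iff]
      exact (isCoprime_X_sub_C_of_isUnit_sub
        (sub_ne_zero.2 (c.injective.ne hij)).isUnit).pow
    obtain ⟨s, hs⟩ := Ideal.pi_quotient_surjective hco (fun i => Ideal.Quotient.mk _ (q i))
    refine ⟨s, ?_⟩
    ext i
    have h1 := hs i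
    rw [Ideal.Quotient.mk_eq_mk_iff_sub_mem, Ideal.mem_span_singleton] at h1
    obtain ⟨d, hd⟩ := h1
    have h2 : (aeval r s) i = aeval (r i) s :=
      (aeval_algHom_apply (Pi.evalAlgHom F (fun i => F[X] ⧸ J i) i) r s).symm
    rw [h2, ← hq i, ← sub_eq_zero, ← map_sub, hd, map_mul]
    have h3 : aeval (r i) ((X - C (c i)) ^ e i) = 0 := by
      have h : aeval (r i) (X - C (c i)) = Ideal.Quotient.mk (J i) (X - C (a i)) := by
        simp only [map_sub, aeval_X, aeval_C, r, map_add]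
        change _ + Ideal.Quotient.mk (J i) (C (c i)) - Ideal.Quotient.mk (J i) (C (c i)) = _
        ring
      rw [map_pow, h, ← map_pow, Ideal.Quotient.eq_zero_iff_mem]
      exact Ideal.mem_span_singleton.2 (pow_dvd_pow_of_dvd (ha i) _)
    rw [h3, zero_mul]

/-- Krylov matrix. -/
def kry {R : Type*} [CommRing R] {n : ℕ} (C : Matrix (Fin n) (Fin n) R) (v : Fin n → R) :
    Matrix (Fin n) (Fin n) R := Matrix.of fun i k => ((C ^ (k : ℕ)).mulVec v) i

lemma kry_mulVec {R : Type*} [CommRing R] {n : ℕ} (C : Matrix (Fin n) (Fin n) R) (v a : Fin n → R) :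
    (kry C v).mulVec a = (∑ k : Fin n, a k • C ^ (k : ℕ)).mulVec v := by
  rw [Matrix.sum_mulVec]
  ext i
  simp only [kry, Matrix.mulVec, dotProduct, Matrix.of_apply, Finset.sum_apply, Matrix.smul_apply,
    smul_eq_mul, Finset.sum_mul]
  refine Finset.sum_congr rfl fun k _ => Finset.sum_congr rfl fun j _ => by ring

lemma exists_cyc_mat {F : Type*} [Field F] [IsAlgClosed F] {n : ℕ}
    (B : Matrix (Fin n) (Fin n) F) : ∃ (R : Matrix (Fin n) (Fin n) F) (v : Fin n → F),
      B * R = R * B ∧ (kry R v).det ≠ 0 := by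
  obtain ⟨g, v, hc, hv⟩ := exists_cyc_end (Matrix.toLin' B)
  obtain ⟨R, rfl⟩ := Matrix.toLin'.surjective g
  refine ⟨R, v, ?_, ?_⟩
  · apply Matrix.toLin'.injective
    rw [Matrix.toLin'_mul, Matrix.toLin'_mul]
    exact LinearMap.ext hc
  · have hs : Function.Surjective (kry R v).mulVec := by
      intro w
      obtain ⟨q, hq⟩ := hv w
      have h1 : Polynomial.aeval (Matrix.toLin' R) q = Matrix.toLin' (Polynomial.aeval R q) :=
        Polynomial.aeval_algHom_apply (Matrix.toLinAlgEquiv' (R := F) (n := Fin n)).toAlgHom R q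
      rw [h1, Matrix.toLin'_apply, Matrix.aeval_eq_aeval_mod_charpoly] at hq
      set s := q %ₘ R.charpoly
      refine ⟨fun k => s.coeff k, ?_⟩
      rw [kry_mulVec, ← hq]
      rcases n with _ | n
      · ext i; exact i.elim0
      · have hd : s.natDegree < n + 1 := by
          have := Polynomial.natDegree_modByMonic_lt q R.charpoly_monic (by
            intro h
            have := R.charpoly_natDegree_eq_dim
            rw [h] at this; simp at this)
          rwa [R.charpoly_natDegree_eq_dim, Fintype.card_fin] at this
        rw [Polynomial.aeval_eq_sum_range' hd, Finset.sum_range]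
    have := Matrix.mulVec_surjective_iff_isUnit.1 hs
    exact ((Matrix.isUnit_iff_isUnit_det _).1 this).ne_zero

lemma eq_poly_of_commute {F : Type*} [Field F] {n : ℕ}
    (B C : Matrix (Fin n) (Fin n) F) (v : Fin n → F) (h : C * B = B * C)
    (hd : (kry C v).det ≠ 0) : ∃ a : Fin n → F, B = ∑ k : Fin n, a k • C ^ (k : ℕ) := by
  have hu : IsUnit (kry C v) := (Matrix.isUnit_iff_isUnit_det _).2 hd.isUnit
  obtain ⟨a, ha⟩ := Matrix.mulVec_surjective_iff_isUnit.2 hu (B.mulVec v)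
  refine ⟨a, hu.mul_right_cancel ?_⟩
  rw [kry_mulVec] at ha
  set P := ∑ k : Fin n, a k • C ^ (k : ℕ)
  have hP : Commute C P := by
    apply Commute.sum_right
    intro k _
    exact ((Commute.refl C).pow_right _).smul_right _
  have hB : Commute C B := h
  have col : ∀ D : Matrix (Fin n) (Fin n) F, Commute C D →
      D * kry C v = Matrix.of fun i (k : Fin n) => ((C ^ (k : ℕ)).mulVec (D.mulVec v)) i := by
    intro D hD
    ext i k
    rw [Matrix.of_apply, Matrix.mulVec_mulVec, (hD.pow_left k).eq, ← Matrix.mulVec_mulVec]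
    rfl
  rw [col B hB, col P hP, ha]

lemma kry_map {R S : Type*} [CommRing R] [CommRing S] (φ : R →+* S) {n : ℕ}
    (C : Matrix (Fin n) (Fin n) R) (v : Fin n → R) :
    φ (kry C v).det = (kry (C.map φ) (φ ∘ v)).det := by
  rw [RingHom.map_det]
  congr 1
  ext i k
  simp only [kry, RingHom.mapMatrix_apply, Matrix.map_apply, Matrix.of_apply]
  rw [RingHom.map_mulVec, ← RingHom.mapMatrix_apply, map_pow]
  rfl

open Polynomial in
lemma vanish_of_param {F : Type*} [Field F] [IsAlgClosed F] {n : ℕ}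
    (f : MvPolynomial ((Fin n × Fin n) ⊕ (Fin n × Fin n)) F)
    (hf : ∀ (A : Matrix (Fin n) (Fin n) F) (a : Fin n → F),
      MvPolynomial.aeval (Sum.elim (fun p => A p.1 p.2)
        (fun p => (∑ k : Fin n, a k • A ^ (k : ℕ)) p.1 p.2)) f = 0)
    (A B : Matrix (Fin n) (Fin n) F) (h : A * B = B * A) :
    MvPolynomial.aeval (Sum.elim (fun p => A p.1 p.2) (fun p => B p.1 p.2)) f = 0 := by
  obtain ⟨R, v, hR, hv⟩ := exists_cyc_mat B
  let M : Matrix (Fin n) (Fin n) F[X] := Matrix.of fun i j => C (R i j) + X * C (A i j - R i j)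
  have hM : ∀ t, M.map (evalRingHom t) = R + t • (A - R) := by
    intro t; ext i j; simp [M]
  let d : F[X] := (kry M (fun i => C (v i))).det
  have hd : ∀ t, d.eval t = (kry (R + t • (A - R)) v).det := by
    intro t
    rw [← hM]
    refine (kry_map (evalRingHom t) M (fun i => C (v i))).trans ?_
    congr 2
    ext i; simp
  have hd0 : d ≠ 0 := by
    intro h0
    have := hd 0
    simp [h0] at this
    exact hv this.symm
  let g : F[X] := MvPolynomial.aeval (Sum.elim (fun p => M p.1 p.2) (fun p => C (B p.1 p.2))) f
  have hg : ∀ t, g.eval t = MvPolynomial.aeval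
      (Sum.elim (fun p => (R + t • (A - R)) p.1 p.2) (fun p => B p.1 p.2)) f := by
    intro t
    have h1 := MvPolynomial.comp_aeval_apply (R := F)
      (f := (Sum.elim (fun p => M p.1 p.2) (fun p => C (B p.1 p.2)) :
        (Fin n × Fin n) ⊕ (Fin n × Fin n) → F[X])) (Polynomial.aeval t) f
    rw [← Polynomial.coe_aeval_eq_eval]
    refine h1.trans ?_
    congr 2
    ext s
    rcases s with p | p <;> simp [M]
  have hmul : d * g = 0 := by
    apply Polynomial.funext
    intro t
    rw [eval_mul, eval_zero]
    by_cases ht : d.eval t = 0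
    · rw [ht, zero_mul]
    · rw [hd] at ht
      obtain ⟨a, ha⟩ := eq_poly_of_commute B _ v (by
        simp only [add_mul, mul_add, smul_mul_assoc, mul_smul_comm, sub_mul, mul_sub, h, hR]) ht
      rw [hg]
      have := hf (R + t • (A - R)) a
      rw [← ha] at this
      rw [this, mul_zero]
  have hg0 : g = 0 := (mul_eq_zero.1 hmul).resolve_left hd0
  have := hg 1
  rw [hg0] at this
  simpa using this.symm

/-- Motzkin–Taussky: the variety `C(2,n)` of commuting pairs of `n × n` matrices over an
algebraically closed field is irreducible; equivalently, the radical of the ideal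
generated by the entries of the commutator of two generic matrices is prime. -/
theorem commuting_pairs_variety_irreducible (F : Type*) [Field F] [IsAlgClosed F]
    (n : ℕ) (hn : 1 ≤ n)
    (X Y : Matrix (Fin n) (Fin n) (MvPolynomial ((Fin n × Fin n) ⊕ (Fin n × Fin n)) F))
    (hX : ∀ i j, X i j = MvPolynomial.X (Sum.inl (i, j)))
    (hY : ∀ i j, Y i j = MvPolynomial.X (Sum.inr (i, j)))
    (I : Ideal (MvPolynomial ((Fin n × Fin n) ⊕ (Fin n × Fin n)) F))
    (hI : I = Ideal.span {p | ∃ i j, p = (X * Y - Y * X) i j}) :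
    I.radical.IsPrime := by
  let S := MvPolynomial ((Fin n × Fin n) ⊕ Fin n) F
  let G : Matrix (Fin n) (Fin n) S := Matrix.of fun i j => MvPolynomial.X (Sum.inl (i, j))
  let P : Matrix (Fin n) (Fin n) S :=
    ∑ k : Fin n, (MvPolynomial.X (Sum.inr k) : S) • G ^ (k : ℕ)
  have hGP : G * P = P * G := by
    have : Commute G P := by
      apply Commute.sum_right
      intro k _
      exact ((Commute.refl G).pow_right _).smul_right _
    exact this
  let φ : MvPolynomial ((Fin n × Fin n) ⊕ (Fin n × Fin n)) F →ₐ[F] S :=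
    MvPolynomial.aeval (Sum.elim (fun p => G p.1 p.2) (fun p => P p.1 p.2))
  have hker : I.radical = RingHom.ker φ := by
    apply le_antisymm
    · refine (Ideal.IsPrime.radical_le_iff (RingHom.ker_isPrime φ)).2 ?_
      rw [hI, Ideal.span_le]
      rintro _ ⟨i, j, rfl⟩
      have h1 : X.map φ = G := by ext1 i j; simp [hX, φ]
      have h2 : Y.map φ = P := by ext1 i j; simp [hY, φ]
      change φ _ = 0
      have h3 : φ ((X * Y - Y * X) i j) = (X.map φ * Y.map φ - Y.map φ * X.map φ) i j := by
        simp [Matrix.mul_apply, Matrix.sub_apply]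
      rw [h3, h1, h2, hGP, sub_self]; rfl
    · intro f hf
      have hf : φ f = 0 := hf
      rw [← MvPolynomial.vanishingIdeal_zeroLocus_eq_radical (K := F),
        MvPolynomial.mem_vanishingIdeal_iff]
      intro x hx
      let A : Matrix (Fin n) (Fin n) F := Matrix.of fun i j => x (Sum.inl (i, j))
      let B : Matrix (Fin n) (Fin n) F := Matrix.of fun i j => x (Sum.inr (i, j))
      have hxe : x = Sum.elim (fun p => A p.1 p.2) (fun p => B p.1 p.2) := by
        ext s; rcases s with p | p <;> rfl
      have hAB : A * B = B * A := by
        rw [← sub_eq_zero]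
        ext i j
        have h0 : MvPolynomial.aeval x ((X * Y - Y * X) i j) = 0 :=
          hx _ (hI ▸ Ideal.subset_span ⟨i, j, rfl⟩)
        rw [Matrix.zero_apply, ← h0]
        simp [Matrix.mul_apply, Matrix.sub_apply, hX, hY, A, B]
      rw [hxe]
      refine vanish_of_param f ?_ A B hAB
      intro A a
      let ev : S →ₐ[F] F := MvPolynomial.aeval (Sum.elim (fun p => A p.1 p.2) a)
      have h1 : ev (φ f) = 0 := by rw [hf, map_zero]
      rw [← h1, MvPolynomial.comp_aeval_apply]
      congr 2
      have hG : ev.mapMatrix G = A := by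
        ext1 i j
        exact MvPolynomial.aeval_X _ _
      have hP : ev.mapMatrix P = ∑ k : Fin n, a k • A ^ (k : ℕ) := by
        rw [map_sum]
        refine Finset.sum_congr rfl fun k _ => ?_
        have hk : ev (MvPolynomial.X (Sum.inr k)) = a k := MvPolynomial.aeval_X _ _
        have hp : ev.mapMatrix (G ^ (k : ℕ)) = A ^ (k : ℕ) := by
          rw [← hG]; exact map_pow ev.mapMatrix G k
        rw [← hp, ← hk]
        ext i j
        exact map_mul ev _ _
      ext s
      rcases s with p | p
      · simp [← congrFun (congrFun hG p.1) p.2]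
      · simp only [Sum.elim_inr, ← hP]; rfl
  rw [hker]
  exact RingHom.ker_isPrime φ
end

section
/- Let F be an algebraically closed field and fix n ≥ 1. Let I be the ideal of R = MvPolynomial ((Fin n × Fin n) ⊕ (Fin n × Fin n) ⊕ (Fin n × Fin n)) F generated by the 3n² entries of the pairwise commutators X*Y − Y*X, X*Z − Z*X, Y*Z − Z*Y of the three generic n×n matrices X, Y, Z. If the radical of I is a prime ideal (i.e. the variety of commuting triples of n×n matrices is irreducible), then for all pairwise commuting n×n matrices A, B, C over F, the F-vector space dimension of the unital subalgebra generated by A, B, C is at most n. -/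
theorem aux_key {S : Type*} [CommRing S] [IsDomain S] {n : ℕ} (i0 : Fin n)
    (x : Matrix (Fin n) (Fin n) S)
    (hd : (Matrix.of fun i k : Fin n => (x ^ (k : ℕ)) i i0).det ≠ 0)
    (w : Fin (n + 1) → Matrix (Fin n) (Fin n) S) (hw : ∀ j, Commute (w j) x) :
    ∃ c : Fin (n + 1) → S, c ≠ 0 ∧ ∑ j, c j • w j = 0 := by
  have hdep : ¬ LinearIndependent S (fun j : Fin (n + 1) => fun i : Fin n => w j i i0) := by
    intro h
    have := h.fintype_card_le_finrank
    simp at this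
  rw [Fintype.not_linearIndependent_iff] at hdep
  obtain ⟨c, hc, j, hj⟩ := hdep
  refine ⟨c, fun h => hj (by simp [h]), ?_⟩
  set W := ∑ j, c j • w j with hW
  have hcomm : Commute W x := by
    refine Commute.sum_left _ _ _ fun j _ => (hw j).smul_left _
  have hcol : ∀ i, W i i0 = 0 := by
    intro i
    have := congrFun hc i
    simpa [hW, Matrix.sum_apply] using this
  have hWM : W * (Matrix.of fun i k : Fin n => (x ^ (k : ℕ)) i i0) = 0 := by
    ext i k
    have h1 : (W * x ^ (k : ℕ)) i i0 = (x ^ (k : ℕ) * W) i i0 := by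
      rw [(hcomm.pow_right k).eq]
    have h2 : (x ^ (k : ℕ) * W) i i0 = 0 := by
      simp [Matrix.mul_apply, hcol]
    rw [h2] at h1
    simpa [Matrix.mul_apply] using h1
  have h3 : (Matrix.of fun i k : Fin n => (x ^ (k : ℕ)) i i0).det • W = 0 := by
    have := congrArg (· * (Matrix.of fun i k : Fin n => (x ^ (k : ℕ)) i i0).adjugate) hWM
    simpa [Matrix.mul_assoc, Matrix.mul_adjugate] using this
  exact (smul_eq_zero.mp h3).resolve_left hd

theorem aux_shift {F : Type*} [Field F] {n : ℕ} (hn : 0 < n) (k : ℕ) (hk : k < n) (i : Fin n) :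
    ((Matrix.of fun i j : Fin n => if (i : ℕ) = j + 1 then (1 : F) else 0) ^ k) i ⟨0, hn⟩
      = if (i : ℕ) = k then 1 else 0 := by
  induction k generalizing i with
  | zero => simp [Matrix.one_apply, Fin.ext_iff]
  | succ k ih =>
    rw [pow_succ', Matrix.mul_apply]
    simp only [ih (by omega)]
    rw [Finset.sum_eq_single ⟨k, by omega⟩]
    · simp
    · intro b _ hb
      have : (b : ℕ) ≠ k := fun h => hb (Fin.ext h)
      simp [this]
    · simp

theorem aux_free {R S : Type*} {n : ℕ} {F : Type*} [Field F] [CommRing R] [CommRing S]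
    [Algebra F R] [Algebra F S] (φ : R →ₐ[F] S) (T : Fin 3 → Matrix (Fin n) (Fin n) R)
    (p : FreeAlgebra F (Fin 3)) :
    φ.mapMatrix (FreeAlgebra.lift F T p) = FreeAlgebra.lift F (fun i => φ.mapMatrix (T i)) p := by
  have : φ.mapMatrix.comp (FreeAlgebra.lift F T)
      = FreeAlgebra.lift F (fun i => φ.mapMatrix (T i)) := by
    ext; simp
  exact DFunLike.congr_fun this p

theorem aux_comm {F M : Type*} [Field F] [Ring M] [Algebra F M] (T : Fin 3 → M) (x : M)
    (h : ∀ i, Commute (T i) x) (p : FreeAlgebra F (Fin 3)) :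
    Commute (FreeAlgebra.lift F T p) x := by
  induction p using FreeAlgebra.induction with
  | grade0 r => rw [AlgHom.commutes]; exact Algebra.commutes r x
  | grade1 i => simpa using h i
  | mul a b ha hb => simpa using ha.mul_left hb
  | add a b ha hb => simpa using ha.add_left hb

/-- If the variety `C(3,n)` of commuting triples of `n × n` matrices over an algebraically
closed field `F` is irreducible (the radical of the commutator-entries ideal is prime),
then every pairwise commuting triple of `n × n` matrices over `F` generates a subalgebra
of dimension at most `n`. -/
theorem dim_le_of_commuting_triples_variety_irreducible (F : Type*) [Field F]
    [IsAlgClosed F] (n : ℕ) (hn : 1 ≤ n)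
    (X Y Z : Matrix (Fin n) (Fin n)
      (MvPolynomial ((Fin n × Fin n) ⊕ (Fin n × Fin n) ⊕ (Fin n × Fin n)) F))
    (hX : ∀ i j, X i j = MvPolynomial.X (Sum.inl (i, j)))
    (hY : ∀ i j, Y i j = MvPolynomial.X (Sum.inr (Sum.inl (i, j))))
    (hZ : ∀ i j, Z i j = MvPolynomial.X (Sum.inr (Sum.inr (i, j))))
    (I : Ideal (MvPolynomial ((Fin n × Fin n) ⊕ (Fin n × Fin n) ⊕ (Fin n × Fin n)) F))
    (hI : I = Ideal.span
      ({p | ∃ i j, p = (X * Y - Y * X) i j} ∪ {p | ∃ i j, p = (X * Z - Z * X) i j} ∪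
        {p | ∃ i j, p = (Y * Z - Z * Y) i j}))
    (hprime : I.radical.IsPrime) :
    ∀ A B C : Matrix (Fin n) (Fin n) F,
      A * B = B * A → A * C = C * A → B * C = C * B →
      Module.finrank F ↥(Algebra.adjoin F {A, B, C}) ≤ n := by
  classical
  have hXYZ : ∀ A B C : Matrix (Fin n) (Fin n) F,
      ∃ φ : MvPolynomial ((Fin n × Fin n) ⊕ (Fin n × Fin n) ⊕ (Fin n × Fin n)) F →ₐ[F] F,
        φ.mapMatrix X = A ∧ φ.mapMatrix Y = B ∧ φ.mapMatrix Z = C ∧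
        (A * B = B * A → A * C = C * A → B * C = C * B → ∀ p ∈ I.radical, φ p = 0) := by
    intro A B C
    let φ : MvPolynomial ((Fin n × Fin n) ⊕ (Fin n × Fin n) ⊕ (Fin n × Fin n)) F →ₐ[F] F :=
      MvPolynomial.aeval (Sum.elim (fun q => A q.1 q.2)
        (Sum.elim (fun q => B q.1 q.2) (fun q => C q.1 q.2)))
    have h1 : φ.mapMatrix X = A := by ext i j; simp [φ, hX]
    have h2 : φ.mapMatrix Y = B := by ext i j; simp [φ, hY]
    have h3 : φ.mapMatrix Z = C := by ext i j; simp [φ, hZ]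
    refine ⟨φ, h1, h2, h3, fun hAB hAC hBC p hp => ?_⟩
    have key : ∀ U V : Matrix (Fin n) (Fin n) _, φ.mapMatrix U * φ.mapMatrix V =
        φ.mapMatrix V * φ.mapMatrix U → ∀ i j, φ ((U * V - V * U) i j) = 0 := by
      intro U V h i j
      have : φ.mapMatrix (U * V - V * U) = 0 := by rw [map_sub, map_mul, map_mul, h, sub_self]
      exact congrFun (congrFun this i) j
    have hle : I ≤ RingHom.ker φ := by
      rw [hI, Ideal.span_le]
      rintro p ((⟨i, j, rfl⟩ | ⟨i, j, rfl⟩) | ⟨i, j, rfl⟩)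
      · exact key X Y (by rw [h1, h2, hAB]) i j
      · exact key X Z (by rw [h1, h3, hAC]) i j
      · exact key Y Z (by rw [h2, h3, hBC]) i j
    obtain ⟨m, hm⟩ := hp
    have := hle hm
    rw [RingHom.mem_ker, map_pow] at this
    by_contra hne
    exact pow_ne_zero m hne this
  intro A B C hAB hAC hBC
  by_contra hlt
  push Not at hlt
  obtain ⟨u, hu⟩ := exists_linearIndependent_of_le_finrank (Nat.succ_le_of_lt hlt)
  have hu' : LinearIndependent F (fun j => (u j : Matrix (Fin n) (Fin n) F)) :=
    hu.map' (Algebra.adjoin F {A, B, C}).val.toLinearMap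
      (LinearMap.ker_eq_bot.mpr Subtype.val_injective)
  have hran : ∀ j, ∃ p, FreeAlgebra.lift F ![A, B, C] p = (u j : Matrix (Fin n) (Fin n) F) := by
    intro j
    have h := (u j).2
    have hs : ({A, B, C} : Set (Matrix (Fin n) (Fin n) F)) = Set.range ![A, B, C] := by
      ext M
      simp [eq_comm]
      tauto
    have he : Algebra.adjoin F {A, B, C} = (FreeAlgebra.lift F ![A, B, C]).range := by
      rw [hs, Algebra.adjoin_range_eq_range_freeAlgebra_lift]
    exact he.le h
  choose p hp using hran
  obtain ⟨g, hg⟩ := LinearMap.exists_leftInverse_of_injective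
    (Fintype.linearCombination F (fun j => (u j : Matrix (Fin n) (Fin n) F)))
    (LinearMap.ker_eq_bot.mpr hu'.fintypeLinearCombination_injective)
  have hgu : ∀ j i, g (u j : Matrix (Fin n) (Fin n) F) i = if i = j then 1 else 0 := by
    intro j i
    have := congrFun (LinearMap.congr_fun hg (Pi.single j 1)) i
    simpa [Fintype.linearCombination_apply_single, Pi.single_apply] using this
  -- coefficients of `g`
  let G : Fin (n + 1) → Fin n → Fin n → F := fun i a b => g (Matrix.single a b 1) i
  have hG : ∀ i (U : Matrix (Fin n) (Fin n) F), g U i = ∑ a, ∑ b, G i a b * U a b := by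
    intro i U
    conv_lhs => rw [Matrix.matrix_eq_sum_single U]
    simp only [map_sum, Finset.sum_apply]
    refine Finset.sum_congr rfl fun a _ => Finset.sum_congr rfl fun b _ => ?_
    have : Matrix.single a b (U a b) = U a b • Matrix.single a b (1 : F) := by
      simp
    rw [this, map_smul, Pi.smul_apply, smul_eq_mul, mul_comm]
  let w := fun j => FreeAlgebra.lift F ![X, Y, Z] (p j)
  let N : Matrix (Fin (n + 1)) (Fin (n + 1))
      (MvPolynomial ((Fin n × Fin n) ⊕ (Fin n × Fin n) ⊕ (Fin n × Fin n)) F) :=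
    Matrix.of fun i j => ∑ a, ∑ b, algebraMap F _ (G i a b) * w j a b
  -- the minor does not vanish at `(A, B, C)`
  have hN1 : N.det ∉ I.radical := by
    intro hmem
    obtain ⟨φ, h1, h2, h3, h4⟩ := hXYZ A B C
    have h5 := h4 hAB hAC hBC _ hmem
    have hw : ∀ j, φ.mapMatrix (w j) = u j := by
      intro j
      rw [← hp j, aux_free]
      congr 2
      funext i
      fin_cases i <;> simp [← h1, ← h2, ← h3]
    have h6 : φ.mapMatrix N = 1 := by
      ext i j
      have h7 := hgu j i
      rw [hG, ← hw] at h7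
      simpa [N, Matrix.one_apply] using h7
    rw [AlgHom.map_det, h6, Matrix.det_one] at h5
    exact one_ne_zero h5
  -- the cyclic vector determinant is not in the radical
  let D := (Matrix.of fun i k : Fin n => (X ^ (k : ℕ)) i ⟨0, hn⟩).det
  have hD : D ∉ I.radical := by
    intro hmem
    obtain ⟨φ, h1, h2, h3, h4⟩ :=
      hXYZ (Matrix.of fun i j : Fin n => if (i : ℕ) = j + 1 then (1 : F) else 0) 0 0
    have h5 := h4 (by simp) (by simp) (by simp) _ hmem
    have h6 : φ.mapMatrix (Matrix.of fun i k : Fin n => (X ^ (k : ℕ)) i ⟨0, hn⟩) = 1 := by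
      ext i k
      have h7 := aux_shift (F := F) hn k k.2 i
      rw [← h1, ← map_pow] at h7
      simpa [Matrix.one_apply, Fin.ext_iff] using h7
    rw [AlgHom.map_det, h6, Matrix.det_one] at h5
    exact one_ne_zero h5
  -- pass to the quotient domain
  have := hprime
  let q := Ideal.Quotient.mkₐ F I.radical
  have hq0 : ∀ r, q r = 0 ↔ r ∈ I.radical := fun r => Ideal.Quotient.eq_zero_iff_mem
  have hcm : ∀ U V : Matrix (Fin n) (Fin n) _, (∀ i j, (U * V - V * U) i j ∈ I) →
      Commute (q.mapMatrix U) (q.mapMatrix V) := by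
    intro U V h
    have : q.mapMatrix (U * V - V * U) = 0 := by
      ext i j
      exact (hq0 _).2 (Ideal.le_radical (h i j))
    rw [map_sub, map_mul, map_mul, sub_eq_zero] at this
    exact this
  have hxy : Commute (q.mapMatrix X) (q.mapMatrix Y) := hcm X Y fun i j => by
    rw [hI]; exact Ideal.subset_span (Or.inl (Or.inl ⟨i, j, rfl⟩))
  have hxz : Commute (q.mapMatrix X) (q.mapMatrix Z) := hcm X Z fun i j => by
    rw [hI]; exact Ideal.subset_span (Or.inl (Or.inr ⟨i, j, rfl⟩))
  obtain ⟨c, hc0, hc⟩ := aux_key ⟨0, hn⟩ (q.mapMatrix X)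
    (by
      intro h
      apply hD
      rw [← hq0, AlgHom.map_det, ← h]
      congr 1
      ext i k
      have h8 : q.mapMatrix (X ^ (k : ℕ)) = q.mapMatrix X ^ (k : ℕ) := map_pow _ _ _
      exact congrFun (congrFun h8 i) ⟨0, hn⟩)
    (fun j => q.mapMatrix (w j))
    (by
      intro j
      simp only [w]
      rw [aux_free]
      apply aux_comm
      intro i
      fin_cases i
      · exact Commute.refl _
      · exact hxy.symm
      · exact hxz.symm)
  apply hN1
  rw [← hq0, AlgHom.map_det, ← Matrix.exists_mulVec_eq_zero_iff]
  refine ⟨c, hc0, ?_⟩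
  funext i
  have hab : ∀ a b, ∑ j, c j * q (w j a b) = 0 := by
    intro a b
    have := congrFun (congrFun hc a) b
    simpa [Matrix.sum_apply] using this
  simp only [Matrix.mulVec, dotProduct, AlgHom.mapMatrix_apply, Matrix.map_apply, N, Matrix.of_apply,
    map_sum, map_mul, AlgHom.commutes, Finset.sum_mul, Pi.zero_apply]
  rw [Finset.sum_comm]
  refine Finset.sum_eq_zero fun a _ => ?_
  rw [Finset.sum_comm]
  refine Finset.sum_eq_zero fun b _ => ?_
  rw [← mul_zero (algebraMap F _ (G i a b)), ← hab a b, Finset.mul_sum]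
  refine Finset.sum_congr rfl fun j _ => ?_
  ring
end
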